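/- arXiv:math/0112314 — 2 statements merged into one kernel-verified Lean document; each statement's English description precedes it below -/
import Mathlib

section
/- Let V be a 2-dimensional vector space over a field of characteristic zero. Then for all positive integers m, n there are isomorphisms of sl(V)-modules: S^n(S^m(V)) ≅ S^m(S^n(V)) (Hermite's reciprocity), and Λ^m(S^{n+m−1}(V)) ≅ S^m(S^n(V)). -/
/-!
STATEMENT 11: Let V be a 2-dimensional vector space over a field of
characteristic zero.  Then for all positive integers m, n there are
isomorphisms of sl(V)-modules
  S^n(S^m(V)) ≅ S^m(S^n(V))          (Hermite reciprocity), and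
  Λ^m(S^{n+m−1}(V)) ≅ S^m(S^n(V)).

Encoding: sl(V) is the space of traceless endomorphisms of V.  The symmetric
power S^j(W) of a space W with chosen basis is modelled as the space of
homogeneous polynomials of degree j in variables indexed by the basis of W,
with an endomorphism x of W acting by the derivation Σ M_{ij} X_i ∂_j
(M the matrix of x); `matSym` is the matrix of the induced action on S^j in
the monomial basis.  The exterior power Λ^m(W) is modelled on the free space
on m-element subsets of the basis of W, an endomorphism acting via `extMat`,
the derivative at the identity of the minor action of GL(W) on Λ^m(W).  An
isomorphism of sl(V)-modules is a linear equivalence commuting with the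
action of every traceless x; for the symmetric model, which lives inside the
full polynomial algebra, equivariance is stated through the ambient action.
-/

noncomputable section

namespace Herm

variable {k : Type} [Field k]

/-- The derivation action of a matrix M ∈ gl_N on polynomial functions:
p ↦ Σ_{i,j} M i j · X i · ∂_j p.  This is the action on the symmetric algebra
induced functorially by the action of M on the linear span of the variables. -/
def polyAct {N : Type} [Fintype N] [DecidableEq N] (M : Matrix N N k) :
    MvPolynomial N k →ₗ[k] MvPolynomial N k :=
  ∑ i, ∑ j, M i j •
    ((LinearMap.mulLeft k (MvPolynomial.X i)).comp
      (MvPolynomial.pderiv j).toLinearMap)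

/-- The exponent of the basis monomial X₀^i X₁^(n−i) of the n-th symmetric
power of a 2-dimensional space. -/
def expnt (n : ℕ) (i : Fin (n + 1)) : Fin 2 →₀ ℕ :=
  Finsupp.single 0 (i : ℕ) + Finsupp.single 1 (n - (i : ℕ))

/-- The basis monomial X₀^i X₁^(n−i) of S^n(k²). -/
def monp (n : ℕ) (i : Fin (n + 1)) : MvPolynomial (Fin 2) k :=
  MvPolynomial.monomial (expnt n i) (1 : k)

/-- The matrix of the action induced on S^n(V) by the endomorphism of V with
matrix M, in the monomial basis. -/
def matSym (n : ℕ) (M : Matrix (Fin 2) (Fin 2) k) :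
    Matrix (Fin (n + 1)) (Fin (n + 1)) k :=
  fun i j => MvPolynomial.coeff (expnt n i) (polyAct M (monp n j))

/-- The matrix of the action induced on Λ^m(k^N) by M ∈ gl_N, in the basis
indexed by m-element subsets of Fin N: the entry at (T, S) is the coefficient
of ε in the T,S-minor of 1 + εM (the derivative at the identity of the action
of GL_N on Λ^m(k^N) by minors). -/
def extMat {N : Type} [Fintype N] [DecidableEq N] [LinearOrder N] (m : ℕ)
    (M : Matrix N N k) (T S : {s : Finset N // s.card = m}) : k :=
  (Matrix.det (Matrix.of fun a b : Fin m =>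
    ((if (T.1.orderIsoOfFin T.2 a : N) = (S.1.orderIsoOfFin S.2 b : N)
        then 1 else 0) +
      Polynomial.X *
        Polynomial.C (M (T.1.orderIsoOfFin T.2 a) (S.1.orderIsoOfFin S.2 b))
      : Polynomial k))).coeff 1

end Herm

open Herm MvPolynomial Module


namespace HermAux

variable {k : Type} [Field k]

/-- action on tensors -/
def tact {m : ℕ} {N : Type} [Fintype N] [DecidableEq N] (M : Matrix N N k)
    (c : (Fin m → N) → k) : (Fin m → N) → k :=
  fun a => ∑ j, ∑ i, M (a j) i * c (Function.update a j i)

/-- projection from tensors to polynomials -/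
def toPoly {m : ℕ} {N : Type} [Fintype N] [DecidableEq N] :
    ((Fin m → N) → k) →ₗ[k] MvPolynomial N k :=
  ∑ a : Fin m → N, (LinearMap.toSpanSingleton k _ (∏ j, X (a j) : MvPolynomial N k)).comp
    (LinearMap.proj a)

lemma toPoly_apply {m : ℕ} {N : Type} [Fintype N] [DecidableEq N] (c : (Fin m → N) → k) :
    toPoly c = ∑ a : Fin m → N, c a • (∏ j, X (a j) : MvPolynomial N k) := by
  simp [toPoly]

lemma polyAct_apply {N : Type} [Fintype N] [DecidableEq N] (M : Matrix N N k)
    (p : MvPolynomial N k) :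
    polyAct M p = ∑ i, ∑ j, M i j • (X i * pderiv j p) := by
  simp [polyAct]

/-- polyAct as derivation -/
def polyDer {N : Type} [Fintype N] [DecidableEq N] (M : Matrix N N k) :
    Derivation k (MvPolynomial N k) (MvPolynomial N k) :=
  ∑ i, ∑ j, M i j • ((X i : MvPolynomial N k) • pderiv j)

lemma polyAct_eq {N : Type} [Fintype N] [DecidableEq N] (M : Matrix N N k)
    (p : MvPolynomial N k) : polyAct M p = polyDer M p := by
  rw [polyAct_apply, polyDer]
  simp only [← Derivation.coeFnAddMonoidHom_apply, map_sum, Finset.sum_apply]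
  simp

lemma polyDer_X {N : Type} [Fintype N] [DecidableEq N] (M : Matrix N N k) (l : N) :
    polyDer M (X l) = ∑ i, M i l • (X i : MvPolynomial N k) := by
  rw [← polyAct_eq, polyAct_apply]
  simp [pderiv_X, Pi.single_apply]

lemma der_prod {A : Type} [CommRing A] [Algebra k A] (D : Derivation k A A) {ι : Type}
    [DecidableEq ι] (s : Finset ι) (f : ι → A) :
    D (∏ i ∈ s, f i) = ∑ i ∈ s, D (f i) * ∏ l ∈ s.erase i, f l := by
  induction s using Finset.induction_on with
  | empty => simp
  | insert a s ha ih =>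
    rw [Finset.prod_insert ha, Derivation.leibniz, ih, Finset.sum_insert ha,
      Finset.erase_insert ha, smul_eq_mul, smul_eq_mul, Finset.mul_sum, add_comm]
    congr 1
    · ring
    · refine Finset.sum_congr rfl fun i hi => ?_
      have : a ≠ i := by rintro rfl; exact ha hi
      rw [Finset.erase_insert_of_ne this, Finset.prod_insert (by simp [ha])]
      ring

lemma prod_update {m : ℕ} {N R : Type} [CommRing R] (f : N → R) (a : Fin m → N) (j : Fin m)
    (i : N) : ∏ l, f (Function.update a j i l) = f i * ∏ l ∈ Finset.univ.erase j, f (a l) := by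
  rw [← Finset.mul_prod_erase Finset.univ _ (Finset.mem_univ j)]
  simp only [Function.update_self]
  congr 1
  refine Finset.prod_congr rfl fun l hl => ?_
  rw [Function.update_of_ne (Finset.ne_of_mem_erase hl)]

/-- reindexing -/
lemma sum_update_swap {m : ℕ} {N R : Type} [Fintype N] [DecidableEq N] [AddCommMonoid R]
    (j : Fin m) (F : (Fin m → N) → (Fin m → N) → R) :
    ∑ a : Fin m → N, ∑ i, F a (Function.update a j i) =
      ∑ a : Fin m → N, ∑ i, F (Function.update a j i) a := by
  rw [← Finset.sum_product', ← Finset.sum_product']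
  refine Finset.sum_bij' (fun x _ => (Function.update x.1 j x.2, x.1 j))
    (fun x _ => (Function.update x.1 j x.2, x.1 j)) ?_ ?_ ?_ ?_ ?_ <;> simp

lemma toPoly_tact {m : ℕ} {N : Type} [Fintype N] [DecidableEq N] (M : Matrix N N k)
    (c : (Fin m → N) → k) : toPoly (tact M c) = polyAct M (toPoly c) := by
  rw [toPoly_apply, toPoly_apply, map_sum]
  simp only [tact, Finset.sum_smul, map_smul]
  simp_rw [polyAct_eq, der_prod, polyDer_X, Finset.sum_mul, Finset.smul_sum]
  rw [Finset.sum_comm]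
  conv_rhs => rw [Finset.sum_comm]
  refine Finset.sum_congr rfl fun j _ => ?_
  have := sum_update_swap (R := MvPolynomial N k) j
    (fun a a' => (M (a j) (a' j) * c a') • ∏ l, (X (a l) : MvPolynomial N k))
  simp only [Function.update_self] at this
  rw [this]
  refine Finset.sum_congr rfl fun a _ => Finset.sum_congr rfl fun i _ => ?_
  rw [prod_update (fun l => (X l : MvPolynomial N k))]
  rw [smul_mul_assoc, smul_smul, mul_comm]

lemma toPoly_mem {m : ℕ} {N : Type} [Fintype N] [DecidableEq N]
    (c : (Fin m → N) → k) : toPoly c ∈ homogeneousSubmodule N k m := by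
  rw [toPoly_apply]
  refine Submodule.sum_mem _ fun a _ => Submodule.smul_mem _ _ ?_
  rw [mem_homogeneousSubmodule]
  simpa using IsHomogeneous.prod Finset.univ (fun j => (X (a j) : MvPolynomial N k)) (fun _ => 1)
    (fun j _ => isHomogeneous_X _ _)

lemma prod_X_eq {m : ℕ} {N : Type} (a : Fin m → N) :
    (∏ j, X (a j) : MvPolynomial N k) = monomial (∑ j, Finsupp.single (a j) 1) 1 := by
  rw [monomial_sum_one]; rfl

lemma exists_perm {m : ℕ} {N : Type} [DecidableEq N] (a b : Fin m → N)
    (h : ∑ j, Finsupp.single (a j) 1 = ∑ j, Finsupp.single (b j) (1 : ℕ)) :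
    ∃ σ : Equiv.Perm (Fin m), b ∘ σ = a := by
  have key : ∀ c, Nonempty ({j // a j = c} ≃ {j // b j = c}) := by
    intro c
    have := DFunLike.congr_fun h c
    simp only [Finsupp.coe_finsetSum, Finset.sum_apply, Finsupp.single_apply,
      Finset.sum_boole, Nat.cast_id] at this
    refine ⟨Fintype.equivOfCardEq ?_⟩
    rw [Fintype.card_subtype, Fintype.card_subtype]
    exact this
  have e := fun c => (key c).some
  exact ⟨Equiv.ofFiberEquiv e, funext fun x => Equiv.ofFiberEquiv_map e x⟩

lemma toPoly_inj [CharZero k] {m : ℕ} {N : Type} [Fintype N] [DecidableEq N]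
    (c : (Fin m → N) → k) (hc : ∀ a (σ : Equiv.Perm (Fin m)), c (a ∘ σ) = c a)
    (h : toPoly c = 0) : c = 0 := by
  funext a
  have h1 := congrArg (coeff (∑ j, Finsupp.single (a j) 1)) h
  rw [toPoly_apply] at h1
  simp only [coeff_sum, coeff_smul, prod_X_eq, coeff_monomial, coeff_zero, smul_eq_mul,
    mul_ite, mul_one, mul_zero] at h1
  rw [← Finset.sum_filter] at h1
  rw [Finset.sum_congr rfl (g := fun _ => c a)] at h1
  · rw [Finset.sum_const, nsmul_eq_mul] at h1
    rcases mul_eq_zero.1 h1 with h2 | h2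
    · exfalso
      rw [Nat.cast_eq_zero, Finset.card_eq_zero] at h2
      have : a ∈ (∅ : Finset (Fin m → N)) := by rw [← h2]; simp
      simp at this
    · exact h2
  · intro b hb
    obtain ⟨σ, rfl⟩ := exists_perm b a (by simpa using hb)
    exact hc _ _

/-- sorted tuple of a subset -/
def srt {m : ℕ} {N : Type} [LinearOrder N] (S : {s : Finset N // s.card = m}) : Fin m → N :=
  fun a => (S.1.orderIsoOfFin S.2 a : N)

lemma srt_inj {m : ℕ} {N : Type} [LinearOrder N] (S : {s : Finset N // s.card = m}) :
    Function.Injective (srt S) := fun a b h => by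
  simpa [srt] using h

lemma image_srt {m : ℕ} {N : Type} [LinearOrder N] (S : {s : Finset N // s.card = m}) :
    Finset.univ.image (srt S) = S.1 := by
  ext x
  simp only [Finset.mem_image, Finset.mem_univ, true_and, srt]
  constructor
  · rintro ⟨a, rfl⟩; exact (S.1.orderIsoOfFin S.2 a).2
  · intro hx
    exact ⟨(S.1.orderIsoOfFin S.2).symm ⟨x, hx⟩, by simp⟩

lemma exists_srt {m : ℕ} {N : Type} [LinearOrder N] (a : Fin m → N) (ha : Function.Injective a) :
    ∃ (S : {s : Finset N // s.card = m}) (σ : Equiv.Perm (Fin m)), srt S ∘ σ = a := by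
  classical
  refine ⟨⟨Finset.univ.image a, by rw [Finset.card_image_of_injective _ ha]; simp⟩, ?_⟩
  apply exists_perm
  set S : {s : Finset N // s.card = m} :=
    ⟨Finset.univ.image a, by rw [Finset.card_image_of_injective _ ha]; simp⟩
  have h1 : ∑ j, Finsupp.single (a j) (1 : ℕ) = ∑ x ∈ S.1, Finsupp.single x 1 := by
    rw [Finset.sum_image (fun x _ y _ h => ha h)]
  have h2 : ∑ j, Finsupp.single (srt S j) (1 : ℕ) = ∑ x ∈ S.1, Finsupp.single x 1 := by
    rw [← image_srt S, Finset.sum_image (fun x _ y _ h => srt_inj S h)]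
  rw [h1, h2]

lemma sum_eq_sum_srt {m : ℕ} {N R : Type} [Fintype N] [LinearOrder N] [AddCommMonoid R]
    (F : (Fin m → N) → R) (hF : ∀ a, ¬ Function.Injective a → F a = 0) :
    ∑ a, F a = ∑ S : {s : Finset N // s.card = m}, ∑ σ : Equiv.Perm (Fin m), F (srt S ∘ σ) := by
  classical
  rw [← Finset.sum_product']
  symm
  refine Finset.sum_of_injOn (fun x => srt x.1 ∘ x.2) ?_ ?_ ?_ ?_
  · rintro ⟨S, σ⟩ _ ⟨S', σ'⟩ _ h
    simp only at h
    have hS : S = S' := by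
      apply Subtype.ext
      rw [← image_srt S, ← image_srt S']
      ext x
      simp only [Finset.mem_image, Finset.mem_univ, true_and]
      constructor
      · rintro ⟨y, rfl⟩
        exact ⟨σ' (σ⁻¹ y), by simpa using (congrFun h (σ⁻¹ y)).symm⟩
      · rintro ⟨y, rfl⟩
        exact ⟨σ (σ'⁻¹ y), by simpa using (congrFun h (σ'⁻¹ y))⟩
    subst hS
    congr 1
    ext y
    exact congrArg _ (srt_inj S (congrFun h y))
  · intro _ _; simp
  · intro a _ ha
    apply hF
    intro hinj
    obtain ⟨S, σ, h⟩ := exists_srt a hinj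
    exact ha ⟨(S, σ), by simp, h⟩
  · intro _ _; rfl

/-- antisymmetric tensors -/
def Alt {m : ℕ} {N : Type} (c : (Fin m → N) → k) : Prop :=
  ∀ a (σ : Equiv.Perm (Fin m)), c (a ∘ σ) = ((Equiv.Perm.sign σ : ℤ) : k) * c a

lemma Alt.zero [CharZero k] {m : ℕ} {N : Type} {c : (Fin m → N) → k} (hc : Alt c)
    (a : Fin m → N) (ha : ¬ Function.Injective a) : c a = 0 := by
  simp only [Function.Injective, not_forall] at ha
  obtain ⟨i, j, h, hij⟩ := ha
  have h1 := hc a (Equiv.swap i j)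
  have h2 : a ∘ Equiv.swap i j = a := by
    funext x
    simp only [Function.comp, Equiv.swap_apply_def]
    split_ifs with h3 h4
    · rw [h3, h]
    · rw [h4, h]
    · rfl
  rw [h2, Equiv.Perm.sign_swap hij] at h1
  simp at h1
  have : (2 : k) * c a = 0 := by linear_combination h1
  simpa using this

lemma coeff_one_prod {m : ℕ} (f g : Fin m → k) :
    (∏ j, (Polynomial.C (f j) + Polynomial.X * Polynomial.C (g j))).coeff 1 =
      ∑ j, g j * ∏ l ∈ Finset.univ.erase j, f l := by
  rw [show (1 : ℕ) = 0 + 1 from rfl]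
  have h : ∀ p : Polynomial k, p.coeff (0+1) = (Polynomial.derivative p).eval 0 := by
    intro p
    rw [← Polynomial.coeff_zero_eq_eval_zero, Polynomial.coeff_derivative]; simp
  rw [h, Polynomial.derivative_prod_finset, Polynomial.eval_finsetSum]
  refine Finset.sum_congr rfl fun j _ => ?_
  rw [Polynomial.eval_mul, Polynomial.eval_prod, mul_comm]
  simp

lemma ext_tact [CharZero k] {m : ℕ} {N : Type} [Fintype N] [LinearOrder N]
    (M : Matrix N N k) (c : (Fin m → N) → k) (hc : Alt c)
    (T : {s : Finset N // s.card = m}) :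
    (Matrix.mulVecLin (Matrix.of (extMat m M)) (fun S => c (srt S))) T = tact M c (srt T) := by
  have h1 : ∀ S : {s : Finset N // s.card = m}, extMat m M T S * c (srt S) =
      ∑ σ : Equiv.Perm (Fin m), (∏ j, (Polynomial.C (if srt T j = srt S (σ j) then 1 else 0) +
        Polynomial.X * Polynomial.C (M (srt T j) (srt S (σ j))))).coeff 1 * c (srt S ∘ σ) := by
    intro S
    rw [extMat, ← Matrix.det_transpose, Matrix.det_apply, Polynomial.finsetSum_coeff,
      Finset.sum_mul]
    refine Finset.sum_congr rfl fun σ _ => ?_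
    rw [hc, Units.smul_def, Polynomial.coeff_smul, zsmul_eq_mul, ← mul_assoc]
    congr 1
    rw [mul_comm]
    congr 2
    refine Finset.prod_congr rfl fun j _ => ?_
    simp only [Matrix.transpose_apply, Matrix.of_apply]
    by_cases h : srt T j = srt S (σ j)
    · rw [if_pos h, if_pos (show (T.1.orderIsoOfFin T.2 j : N) = S.1.orderIsoOfFin S.2 (σ j) from h),
        map_one]
      rfl
    · rw [if_neg h, if_neg (show ¬ (T.1.orderIsoOfFin T.2 j : N) = S.1.orderIsoOfFin S.2 (σ j) from h),
        map_zero]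
      rfl
  simp only [Matrix.mulVecLin_apply, Matrix.mulVec, dotProduct, Matrix.of_apply]
  rw [Finset.sum_congr rfl (fun S _ => h1 S)]
  have h2 := sum_eq_sum_srt (fun a : Fin m → N =>
    (∏ j, (Polynomial.C (if srt T j = a j then (1 : k) else 0) +
        Polynomial.X * Polynomial.C (M (srt T j) (a j)))).coeff 1 * c a)
    (fun a ha => by simp only [hc.zero a ha, mul_zero])
  simp only [Function.comp_apply] at h2
  rw [← h2]
  simp only [coeff_one_prod, Finset.sum_mul, tact]
  rw [Finset.sum_comm]
  refine Finset.sum_congr rfl fun j _ => ?_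
  symm
  refine Finset.sum_of_injOn (fun i => Function.update (srt T) j i) ?_ ?_ ?_ ?_
  · intro i _ i' _ h
    simpa using congrFun h j
  · intro _ _; simp
  · intro a _ ha
    by_cases h : ∀ l, l ≠ j → srt T l = a l
    · exfalso
      apply ha
      refine ⟨a j, by simp, ?_⟩
      funext l
      by_cases hl : l = j
      · subst hl; simp
      · simp [hl, h l hl]
    · push Not at h
      obtain ⟨l, hl, hl'⟩ := h
      rw [Finset.prod_eq_zero (i := l) (by simp [hl]) (by simp [hl'])]
      simp
  · intro i _
    rw [Finset.prod_eq_one]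
    · simp
    · intro l hl
      rw [Function.update_of_ne (Finset.ne_of_mem_erase hl)]
      simp

lemma alt_inj [CharZero k] {m : ℕ} {N : Type} [Fintype N] [LinearOrder N]
    (c : (Fin m → N) → k) (hc : Alt c)
    (h : ∀ T : {s : Finset N // s.card = m}, c (srt T) = 0) : c = 0 := by
  funext a
  by_cases ha : Function.Injective a
  · obtain ⟨S, σ, rfl⟩ := exists_srt a ha
    rw [hc, h]; simp
  · exact hc.zero a ha

end HermAux

namespace HermAux

variable {k : Type} [Field k]

lemma matSym_apply (N : ℕ) (M : Matrix (Fin 2) (Fin 2) k) (i j : Fin (N + 1)) :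
    matSym N M i j =
      (if (i : ℕ) = j then M 0 0 * (j : ℕ) + M 1 1 * ((N : k) - (j : ℕ)) else 0) +
      (if (i : ℕ) = j + 1 then M 0 1 * ((N : k) - (j : ℕ)) else 0) +
      (if (i : ℕ) + 1 = j then M 1 0 * (j : ℕ) else 0) := by
  have hi : (i : ℕ) ≤ N := by omega
  have hj : (j : ℕ) ≤ N := by omega
  generalize hi' : (i : ℕ) = i' at *
  generalize hj' : (j : ℕ) = j' at *
  have h0 : (expnt N j) 0 = j' := by simp [expnt, hj']
  have h1 : (expnt N j) 1 = N - j' := by simp [expnt, hj']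
  have g0 : (expnt N i) 0 = i' := by simp [expnt, hi']
  have g1 : (expnt N i) 1 = N - i' := by simp [expnt, hi']
  have key : ∀ u v : Fin 2, coeff (expnt N i) (X u * pderiv v (monp N j : MvPolynomial (Fin 2) k)) =
      if Finsupp.single u 1 + (expnt N j - Finsupp.single v 1) = expnt N i
        then ((expnt N j v : ℕ) : k) else 0 := by
    intro u v
    rw [monp, pderiv_monomial, X, monomial_mul, coeff_monomial, one_mul, one_mul]
  have t : ∀ (P Q : Prop) [Decidable P] [Decidable Q] (x : ℕ), (P → Q) → (Q → ¬ P → x = 0) →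
      (if P then (x : k) else 0) = if Q then (x : k) else 0 := by
    intro P Q _ _ x h1 h2
    by_cases hP : P
    · rw [if_pos hP, if_pos (h1 hP)]
    · rw [if_neg hP]
      by_cases hQ : Q
      · rw [if_pos hQ, h2 hQ hP]; simp
      · rw [if_neg hQ]
  have s00 : (Finsupp.single (0 : Fin 2) 1 : Fin 2 →₀ ℕ) 0 = 1 := by simp
  have s01 : (Finsupp.single (0 : Fin 2) 1 : Fin 2 →₀ ℕ) 1 = 0 := by simp
  have s10 : (Finsupp.single (1 : Fin 2) 1 : Fin 2 →₀ ℕ) 0 = 0 := by simp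
  have s11 : (Finsupp.single (1 : Fin 2) 1 : Fin 2 →₀ ℕ) 1 = 1 := by simp
  have k00 : coeff (expnt N i) (X 0 * pderiv 0 (monp N j : MvPolynomial (Fin 2) k)) =
      if i' = j' then (j' : k) else 0 := by
    rw [key, h0]
    apply t <;> simp only [Finsupp.ext_iff, Fin.forall_fin_two, Finsupp.add_apply,
      Finsupp.tsub_apply, s00, s01, s10, s11, h0, h1, g0, g1] <;> omega
  have k01 : coeff (expnt N i) (X 0 * pderiv 1 (monp N j : MvPolynomial (Fin 2) k)) =
      if i' = j' + 1 then ((N - j' : ℕ) : k) else 0 := by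
    rw [key, h1]
    apply t <;> simp only [Finsupp.ext_iff, Fin.forall_fin_two, Finsupp.add_apply,
      Finsupp.tsub_apply, s00, s01, s10, s11, h0, h1, g0, g1] <;> omega
  have k10 : coeff (expnt N i) (X 1 * pderiv 0 (monp N j : MvPolynomial (Fin 2) k)) =
      if i' + 1 = j' then (j' : k) else 0 := by
    rw [key, h0]
    apply t <;> simp only [Finsupp.ext_iff, Fin.forall_fin_two, Finsupp.add_apply,
      Finsupp.tsub_apply, s00, s01, s10, s11, h0, h1, g0, g1] <;> omega
  have k11 : coeff (expnt N i) (X 1 * pderiv 1 (monp N j : MvPolynomial (Fin 2) k)) =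
      if i' = j' then ((N - j' : ℕ) : k) else 0 := by
    rw [key, h1]
    apply t <;> simp only [Finsupp.ext_iff, Fin.forall_fin_two, Finsupp.add_apply,
      Finsupp.tsub_apply, s00, s01, s10, s11, h0, h1, g0, g1] <;> omega
  simp only [matSym, polyAct_apply, Fin.sum_univ_two, coeff_add, coeff_smul, k00, k01, k10, k11,
    smul_eq_mul]
  rw [← Nat.cast_sub hj]
  split_ifs <;> first | ring | (exfalso; omega)

lemma matSym_col {A : Type} [AddCommGroup A] [Module k A] (N : ℕ) (M : Matrix (Fin 2) (Fin 2) k)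
    (i : Fin (N + 1)) (G : ℕ → A) :
    ∑ l : Fin (N + 1), matSym N M l i • G l =
      (M 0 0 * (i : ℕ) + M 1 1 * ((N : k) - (i : ℕ))) • G i +
      (M 0 1 * ((N : k) - (i : ℕ))) • G (i + 1) + (M 1 0 * (i : ℕ)) • G (i - 1) := by
  simp only [matSym_apply, add_smul, Finset.sum_add_distrib, ite_smul, zero_smul]
  have hi : (i : ℕ) < N + 1 := i.2
  generalize (i : ℕ) = i' at *
  rw [Fin.sum_univ_eq_sum_range (fun l => if l = i' then (M 0 0 * (i' : k)) • G l + (M 1 1 * ((N : k) - i')) • G l else 0),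
    Fin.sum_univ_eq_sum_range (fun l => if l = i' + 1 then (M 0 1 * ((N : k) - i')) • G l else 0),
    Fin.sum_univ_eq_sum_range (fun l => if l + 1 = i' then (M 1 0 * (i' : k)) • G l else 0)]
  congr 1
  · congr 1
    · simp [hi, ← add_smul]
    · simp only [Finset.sum_ite_eq', Finset.mem_range]
      split_ifs with h
      · rfl
      · have : i' = N := by omega
        subst this; simp
  · rcases i' with _ | i'
    · simp
    · simp only [Nat.add_right_cancel_iff, Finset.sum_ite_eq', Finset.mem_range]
      rw [if_pos (by omega)]; simp

lemma matSym_row (N : ℕ) (M : Matrix (Fin 2) (Fin 2) k)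
    (r : Fin (N + 1)) (G : ℕ → k) (hG : G (N + 1) = 0) :
    ∑ i : Fin (N + 1), matSym N M r i * G i =
      (M 0 0 * (r : ℕ) + M 1 1 * ((N : k) - (r : ℕ))) * G r +
      (if (r : ℕ) = 0 then 0 else M 0 1 * ((N : k) - (r : ℕ) + 1) * G (r - 1)) +
      M 1 0 * ((r : ℕ) + 1) * G (r + 1) := by
  simp only [matSym_apply, add_mul, Finset.sum_add_distrib, ite_mul, zero_mul]
  have hi : (r : ℕ) < N + 1 := r.2
  generalize (r : ℕ) = r' at *
  rw [Fin.sum_univ_eq_sum_range (fun l => if r' = l then M 0 0 * (l : k) * G l + M 1 1 * ((N : k) - l) * G l else 0),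
    Fin.sum_univ_eq_sum_range (fun l => if r' = l + 1 then M 0 1 * ((N : k) - l) * G l else 0),
    Fin.sum_univ_eq_sum_range (fun l => if r' + 1 = l then M 1 0 * (l : k) * G l else 0)]
  congr 1
  · congr 1
    · simp [hi]
    · rcases r' with _ | r'
      · simp
      · simp only [Nat.add_right_cancel_iff, Finset.sum_ite_eq, Finset.mem_range]
        rw [if_pos (by omega)]; simp
        left; left; ring
  · simp only [Finset.sum_ite_eq, Finset.mem_range]
    split_ifs with h
    · push_cast; ring
    · have : r' = N := by omega
      subst this; simp [hG]

/-- exponent vector -/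
def ex {m : ℕ} (f : Fin m → ℕ) : Fin m →₀ ℕ := Finsupp.equivFunOnFinite.symm f

lemma coeff_ex_X_mul {m : ℕ} (f : Fin m → ℕ) (j : Fin m) (p : MvPolynomial (Fin m) k) :
    coeff (ex f) (X j * p) = if f j = 0 then 0 else
      coeff (ex (Function.update f j (f j - 1))) p := by
  rw [coeff_X_mul']
  have : j ∈ (ex f).support ↔ ¬ f j = 0 := by simp [ex]
  simp only [this, ite_not]
  congr 2
  ext l
  by_cases h : l = j
  · subst h; simp [ex]
  · simp [ex, Function.update_of_ne h, Ne.symm h]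

lemma coeff_ex_pderiv {m : ℕ} (f : Fin m → ℕ) (j : Fin m) (p : MvPolynomial (Fin m) k) :
    coeff (ex f) (pderiv j p) =
      coeff (ex (Function.update f j (f j + 1))) p * ((f j : k) + 1) := by
  rw [coeff_pderiv]
  congr 2
  ext l
  by_cases h : l = j
  · subst h; simp [ex]
  · simp [ex, Function.update_of_ne h, Ne.symm h]

/-- coefficient tensor -/
def tens (m N : ℕ) : MvPolynomial (Fin m) k →ₗ[k] ((Fin m → Fin (N + 1)) → k) :=
  LinearMap.pi fun a => lcoeff k (ex fun j => (a j : ℕ))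

lemma tens_apply (m N : ℕ) (g : MvPolynomial (Fin m) k) (a : Fin m → Fin (N + 1)) :
    tens m N g a = coeff (ex fun j => (a j : ℕ)) g := rfl

/-- the derivation part -/
def dlt (m : ℕ) (M : Matrix (Fin 2) (Fin 2) k) :
    Derivation k (MvPolynomial (Fin m) k) (MvPolynomial (Fin m) k) :=
  ∑ j, (C (2 * M 0 0) * X j - C (M 0 1) * (X j * X j) + C (M 1 0)) • pderiv j

lemma dlt_apply (m : ℕ) (M : Matrix (Fin 2) (Fin 2) k) (g : MvPolynomial (Fin m) k) :
    dlt m M g =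
      ∑ j, (C (2 * M 0 0) * X j - C (M 0 1) * (X j * X j) + C (M 1 0)) * pderiv j g := by
  rw [dlt]
  simp only [← Derivation.coeFnAddMonoidHom_apply, map_sum, Finset.sum_apply]
  simp

lemma dlt_X (m : ℕ) (M : Matrix (Fin 2) (Fin 2) k) (l : Fin m) :
    dlt m M (X l) = C (2 * M 0 0) * X l - C (M 0 1) * (X l * X l) + C (M 1 0) := by
  rw [dlt_apply]
  simp [pderiv_X, Pi.single_apply]

/-- the multiplication part -/
def mu (m : ℕ) (M : Matrix (Fin 2) (Fin 2) k) : MvPolynomial (Fin m) k :=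
  ∑ j, (C (M 0 1) * X j - C (M 0 0))

lemma tens_dop (m N : ℕ) (M : Matrix (Fin 2) (Fin 2) k) (hM : M 1 1 = - M 0 0)
    (g : MvPolynomial (Fin m) k) (hg : ∀ j, degreeOf j g ≤ N) :
    tens m N (dlt m M g + (N : k) • (mu m M * g)) = tact (matSym N M) (tens m N g) := by
  funext a
  simp only [tact, tens_apply]
  rw [dlt_apply, mu, Finset.sum_mul, Finset.smul_sum, ← Finset.sum_add_distrib, coeff_sum]
  refine Finset.sum_congr rfl fun j _ => ?_
  set f : Fin m → ℕ := fun j => (a j : ℕ) with hf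
  have h1 : ∀ i : Fin (N + 1), (fun l => ((Function.update a j i l : Fin (N + 1)) : ℕ)) =
      Function.update f j (i : ℕ) := by
    intro i; funext l
    by_cases h : l = j
    · subst h; simp
    · simp [Function.update_of_ne h, hf]
  simp only [h1]
  rw [matSym_row N M (a j) (fun s => coeff (ex (Function.update f j s)) g)]
  · have e1 : (C (2 * M 0 0) * X j - C (M 0 1) * (X j * X j) + C (M 1 0)) * pderiv j g +
        (N : k) • ((C (M 0 1) * X j - C (M 0 0)) * g) =
        C (2 * M 0 0) * (X j * pderiv j g) - C (M 0 1) * (X j * (X j * pderiv j g))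
        + C (M 1 0) * pderiv j g + C ((N : k) * M 0 1) * (X j * g) - C ((N : k) * M 0 0) * g := by
      rw [smul_eq_C_mul]; simp only [C_mul]; ring
    rw [e1]
    simp only [coeff_add, coeff_sub, coeff_C_mul, coeff_ex_X_mul, coeff_ex_pderiv,
      Function.update_idem, Function.update_self]
    have h2 : ((a j : Fin (N + 1)) : ℕ) = f j := rfl
    rw [h2, hM]
    have h3 : coeff (ex f) g = coeff (ex (Function.update f j (f j))) g := by
      rw [Function.update_eq_self]
    rw [h3]
    generalize f j = s
    rcases s with _ | s
    · simp; ring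
    · rcases s with _ | s
      · simp; ring
      · simp; ring
  · by_contra hne
    have := (degreeOf_le_iff.1 (hg j)) _ (mem_support_iff.2 hne)
    simp [ex] at this

lemma tens_inj (m N : ℕ) (g : MvPolynomial (Fin m) k) (hg : ∀ j, degreeOf j g ≤ N)
    (h : tens m N g = 0) : g = 0 := by
  ext e
  by_contra hne
  rw [coeff_zero] at hne
  have hle : ∀ j, e j < N + 1 := fun j =>
    Nat.lt_succ_of_le ((degreeOf_le_iff.1 (hg j)) _ (mem_support_iff.2 hne))
  apply hne
  have := congrFun h (fun j => ⟨e j, hle j⟩)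
  rw [tens_apply] at this
  have h2 : e = ex fun j => e j := by ext l; simp [ex]
  rw [h2]
  exact this

lemma tens_perm (m N : ℕ) (g : MvPolynomial (Fin m) k) (r : k) (σ : Equiv.Perm (Fin m))
    (h : rename σ g = r • g) (a : Fin m → Fin (N + 1)) :
    tens m N g a = r * tens m N g (a ∘ σ.symm) := by
  rw [tens_apply, tens_apply, ← smul_eq_mul, ← coeff_smul, ← h,
    ← coeff_rename_mapDomain σ σ.injective]
  congr 1
  ext l
  obtain ⟨l, rfl⟩ := σ.surjective l
  rw [Finsupp.mapDomain_apply σ.injective]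
  simp [ex]

end HermAux
namespace HermAux

variable {k : Type} [Field k]

lemma esymm_key {m : ℕ} (j : Fin m) (i : ℕ) :
    pderiv j (esymm (Fin m) k (i + 1)) + X j * pderiv j (esymm (Fin m) k i) =
      esymm (Fin m) k i := by
  classical
  set P : ℕ → MvPolynomial (Fin m) k := fun r =>
    ∑ t ∈ Finset.powersetCard r (Finset.univ.erase j), ∏ l ∈ t, X l with hP
  have hs : ∀ r, esymm (Fin m) k (r + 1) = P (r + 1) + X j * P r := by
    intro r
    rw [esymm, ← Finset.insert_erase (Finset.mem_univ j),
      Finset.powersetCard_succ_insert (Finset.notMem_erase j _), Finset.sum_union]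
    · congr 1
      rw [Finset.sum_image, hP, Finset.mul_sum]
      · refine Finset.sum_congr rfl fun t ht => ?_
        rw [Finset.prod_insert]
        intro h
        exact Finset.notMem_erase j _ ((Finset.mem_powersetCard.1 ht).1 h)
      · intro s hs t ht h
        have hs' : j ∉ s := fun h =>
          Finset.notMem_erase j _ ((Finset.mem_powersetCard.1 hs).1 h)
        have ht' : j ∉ t := fun h =>
          Finset.notMem_erase j _ ((Finset.mem_powersetCard.1 ht).1 h)
        rw [← Finset.erase_insert hs', ← Finset.erase_insert ht', h]
    · rw [Finset.disjoint_left]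
      intro s hs h
      obtain ⟨t, ht, rfl⟩ := Finset.mem_image.1 h
      exact Finset.notMem_erase j _ ((Finset.mem_powersetCard.1 hs).1 (Finset.mem_insert_self _ _))
  have hd : ∀ r, pderiv j (P r) = 0 := by
    intro r
    rw [hP, map_sum]
    refine Finset.sum_eq_zero fun t ht => ?_
    rw [der_prod]
    refine Finset.sum_eq_zero fun l hl => ?_
    have : l ≠ j := by
      rintro rfl
      exact Finset.notMem_erase l _ ((Finset.mem_powersetCard.1 ht).1 hl)
    rw [pderiv_X_of_ne this, zero_mul]
  have hd2 : ∀ r, pderiv j (esymm (Fin m) k (r + 1)) = P r := by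
    intro r
    rw [hs, map_add, hd, Derivation.leibniz, hd]
    simp
  rcases i with _ | i
  · rw [hd2]; simp [hP]
  · rw [hd2, hd2, hs]

lemma esymm_B {m : ℕ} (i : ℕ) :
    ∑ j, X j * pderiv j (esymm (Fin m) k i) = (i : MvPolynomial (Fin m) k) * esymm (Fin m) k i := by
  have h : (esymm (Fin m) k i).IsHomogeneous i := by
    rw [esymm]
    refine IsHomogeneous.sum _ _ _ fun t ht => ?_
    have := IsHomogeneous.prod t (fun j => (X j : MvPolynomial (Fin m) k)) (fun _ => 1)
      (fun j _ => isHomogeneous_X _ _)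
    simpa [(Finset.mem_powersetCard.1 ht).2] using this
  rw [h.sum_X_mul_pderiv, nsmul_eq_mul]

lemma esymm_A {m : ℕ} (i : ℕ) :
    ∑ j, pderiv j (esymm (Fin m) k (i + 1)) =
      ((m : MvPolynomial (Fin m) k) - i) * esymm (Fin m) k i := by
  have h : ∑ j, (pderiv j (esymm (Fin m) k (i + 1)) + X j * pderiv j (esymm (Fin m) k i)) =
      ∑ j : Fin m, esymm (Fin m) k i := Finset.sum_congr rfl fun j _ => esymm_key j i
  rw [Finset.sum_add_distrib, esymm_B] at h
  simp at h
  linear_combination h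

lemma esymm_C {m : ℕ} (i : ℕ) :
    ∑ j, X j * X j * pderiv j (esymm (Fin m) k i) =
      (∑ j, X j) * esymm (Fin m) k i - ((i : MvPolynomial (Fin m) k) + 1) * esymm (Fin m) k (i + 1) := by
  have h := esymm_B (k := k) (m := m) (i + 1)
  have h2 : ∑ j, X j * X j * pderiv j (esymm (Fin m) k i) =
      ∑ j, (X j * esymm (Fin m) k i - X j * pderiv j (esymm (Fin m) k (i + 1))) :=
    Finset.sum_congr rfl fun j _ => by
      linear_combination X j * esymm_key (k := k) j i
  rw [h2, Finset.sum_sub_distrib, h, Finset.sum_mul]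
  push_cast; ring

lemma dop_esymm (m : ℕ) (M : Matrix (Fin 2) (Fin 2) k) (i : ℕ) :
    dlt m M (esymm (Fin m) k i) + mu m M * esymm (Fin m) k i =
      C (M 0 0) * (2 * (i : MvPolynomial (Fin m) k) - (m : MvPolynomial (Fin m) k)) * esymm (Fin m) k i +
      C (M 0 1) * ((i : MvPolynomial (Fin m) k) + 1) * esymm (Fin m) k (i + 1) +
      C (M 1 0) * ((m : MvPolynomial (Fin m) k) - (i : MvPolynomial (Fin m) k) + 1) * (if i = 0 then 0 else esymm (Fin m) k (i - 1)) := by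
  have h1 : dlt m M (esymm (Fin m) k i) =
      C (2 * M 0 0) * ∑ j, X j * pderiv j (esymm (Fin m) k i)
      - C (M 0 1) * ∑ j, X j * X j * pderiv j (esymm (Fin m) k i)
      + C (M 1 0) * ∑ j, pderiv j (esymm (Fin m) k i) := by
    rw [dlt_apply, Finset.mul_sum, Finset.mul_sum, Finset.mul_sum, ← Finset.sum_sub_distrib,
      ← Finset.sum_add_distrib]
    refine Finset.sum_congr rfl fun j _ => ?_
    ring
  have h2 : mu m M = C (M 0 1) * ∑ j, X j - (m : MvPolynomial (Fin m) k) * C (M 0 0) := by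
    rw [mu, Finset.sum_sub_distrib, Finset.mul_sum]; simp
  have h3 : ∑ j, pderiv j (esymm (Fin m) k i) =
      ((m : MvPolynomial (Fin m) k) - i + 1) *
        (if i = 0 then 0 else esymm (Fin m) k (i - 1)) := by
    rcases i with _ | i
    · simp
    · rw [esymm_A, if_neg (by omega), Nat.add_sub_cancel]; push_cast; ring
  rw [h1, h2, h3, esymm_B, esymm_C]
  simp only [C_mul, map_ofNat]
  ring

/-- the substitution map -/
def alf (k : Type) [Field k] (m : ℕ) : MvPolynomial (Fin (m + 1)) k →ₐ[k] MvPolynomial (Fin m) k :=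
  aeval fun i => C ((m.choose i : k)⁻¹) * esymm (Fin m) k i

lemma alf_X (m : ℕ) (i : Fin (m + 1)) :
    alf k m (X i) = C ((m.choose i : k)⁻¹) * esymm (Fin m) k i := by
  rw [alf, aeval_X]

lemma alf_gen [CharZero k] (m : ℕ) (M : Matrix (Fin 2) (Fin 2) k) (hM : M 1 1 = - M 0 0)
    (i : Fin (m + 1)) :
    alf k m (polyDer (matSym m M) (X i)) = dlt m M (alf k m (X i)) + mu m M * alf k m (X i) := by
  rw [polyDer_X, map_sum]
  simp only [map_smul, alf_X]
  rw [matSym_col m M i (fun l => C ((m.choose l : k)⁻¹) * esymm (Fin m) k l), hM]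
  rw [Derivation.leibniz, derivation_C, smul_zero, add_zero, smul_eq_mul]
  have h := congrArg (fun z : MvPolynomial (Fin m) k => C ((m.choose i : k)⁻¹) * z) (dop_esymm m M i)
  have hi : (i : ℕ) ≤ m := by omega
  generalize (i : ℕ) = i' at *
  have e1 : C ((m - i' : k) * (m.choose (i' + 1) : k)⁻¹) * esymm (Fin m) k (i' + 1) =
      C ((m.choose i' : k)⁻¹ * (i' + 1)) * esymm (Fin m) k (i' + 1) := by
    rcases hi.eq_or_lt with rfl | hlt
    · have : esymm (Fin i') k (i' + 1) = 0 := by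
        rw [esymm, Finset.powersetCard_eq_empty.2 (by simp), Finset.sum_empty]
      rw [this, mul_zero, mul_zero]
    congr 2
    have hc := Nat.choose_succ_right_eq m i'
    have hc' := congrArg (fun z : ℕ => (z : k)) hc
    simp only [Nat.cast_mul, Nat.cast_sub hi, Nat.cast_add, Nat.cast_one] at hc'
    have z1 : (m.choose (i' + 1) : k) ≠ 0 := by
      exact_mod_cast (Nat.choose_pos (by omega : i' + 1 ≤ m)).ne'
    have z2 : (m.choose i' : k) ≠ 0 := by exact_mod_cast (Nat.choose_pos hi).ne'
    field_simp
    linear_combination -hc'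
  have e2 : (i' : k) * (m.choose (i' - 1) : k)⁻¹ =
      (m.choose i' : k)⁻¹ * (m - i' + 1) * (if i' = 0 then 0 else 1) := by
    rcases i' with _ | i'
    · simp
    have hc := Nat.choose_succ_right_eq m i'
    have hc' := congrArg (fun z : ℕ => (z : k)) hc
    simp only [Nat.cast_mul, Nat.cast_sub (by omega : i' ≤ m), Nat.cast_add, Nat.cast_one] at hc'
    have z1 : (m.choose (i' + 1) : k) ≠ 0 := by
      exact_mod_cast (Nat.choose_pos (by omega : i' + 1 ≤ m)).ne'
    have z2 : (m.choose i' : k) ≠ 0 := by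
      exact_mod_cast (Nat.choose_pos (by omega : i' ≤ m)).ne'
    rw [if_neg (by omega), Nat.add_sub_cancel]
    push_cast
    field_simp
    linear_combination hc'
  have E1 := e1
  have E2 := congrArg (C : k → MvPolynomial (Fin m) k) e2
  simp only [C_mul, C_sub, C_add, C_1, C_0, map_natCast] at E1 E2
  rw [apply_ite (C : k → MvPolynomial (Fin m) k), C_0, C_1] at E2
  simp only [smul_eq_C_mul, C_mul, C_sub, C_add, C_neg, map_natCast]
  split_ifs at h E2 with hz
  · subst hz
    simp at h E1 ⊢
    linear_combination (-1 : MvPolynomial (Fin m) k) * h + C (M 0 1) * E1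
  · linear_combination (-1 : MvPolynomial (Fin m) k) * h +
      C (M 0 1) * E1 + C (M 1 0) * esymm (Fin m) k (i' - 1) * E2

lemma alf_der [CharZero k] (m : ℕ) (M : Matrix (Fin 2) (Fin 2) k) (hM : M 1 1 = - M 0 0)
    (p : MvPolynomial (Fin (m + 1)) k) :
    alf k m (polyDer (matSym m M) p) = dlt m M (alf k m p) + mu m M * alf k m (polyDer 1 p) := by
  induction p using MvPolynomial.induction_on with
  | C a => simp [derivation_C, ← algebraMap_eq]
  | add p q hp hq => simp only [map_add, hp, hq]; ring
  | mul_X p i hp =>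
    have hg := alf_gen m M hM i
    have h1 : polyDer (1 : Matrix (Fin (m + 1)) (Fin (m + 1)) k) (X i) = X i := by
      rw [polyDer_X]; simp [Matrix.one_apply]
    simp only [Derivation.leibniz, smul_eq_mul, map_add, map_mul, hp, hg, h1]
    ring

lemma alf_act [CharZero k] (m n : ℕ) (M : Matrix (Fin 2) (Fin 2) k) (hM : M 1 1 = - M 0 0)
    (p : MvPolynomial (Fin (m + 1)) k) (hp : p.IsHomogeneous n) :
    alf k m (polyAct (matSym m M) p) = dlt m M (alf k m p) + (n : k) • (mu m M * alf k m p) := by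
  rw [polyAct_eq, alf_der m M hM]
  have : polyDer (1 : Matrix (Fin (m + 1)) (Fin (m + 1)) k) p = n • p := by
    rw [← hp.sum_X_mul_pderiv, ← polyAct_eq, polyAct_apply]
    simp [Matrix.one_apply]
  rw [this, map_nsmul, mul_smul_comm, Nat.cast_smul_eq_nsmul]

lemma alf_symm (m : ℕ) (p : MvPolynomial (Fin (m + 1)) k) (σ : Equiv.Perm (Fin m)) :
    rename σ (alf k m p) = alf k m p := by
  induction p using MvPolynomial.induction_on with
  | C a => simp [← algebraMap_eq]
  | add p q hp hq => simp only [map_add, hp, hq]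
  | mul_X p i hp =>
    rw [map_mul, map_mul, hp, alf_X, map_mul, rename_C, rename_esymm]

lemma degreeOf_esymm (m i : ℕ) (j : Fin m) : degreeOf j (esymm (Fin m) k i) ≤ 1 := by
  rw [esymm]
  refine (degreeOf_sum_le _ _ _).trans (Finset.sup_le fun t _ => ?_)
  refine (degreeOf_prod_le _ _ _).trans ?_
  classical
  simp only [degreeOf_X]
  rw [Finset.sum_ite_eq]
  split_ifs <;> simp

lemma alf_degreeOf (m n : ℕ) (p : MvPolynomial (Fin (m + 1)) k) (hp : p.IsHomogeneous n)
    (j : Fin m) : degreeOf j (alf k m p) ≤ n := by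
  rw [alf, aeval_def, eval₂_eq]
  refine (degreeOf_sum_le _ _ _).trans (Finset.sup_le fun d hd => ?_)
  refine (degreeOf_mul_le _ _ _).trans ?_
  rw [algebraMap_eq, degreeOf_C, zero_add]
  refine (degreeOf_prod_le _ _ _).trans ?_
  have h := hp (mem_support_iff.1 hd)
  rw [← h, Finsupp.weight_apply]
  refine Finset.sum_le_sum fun i _ => ?_
  refine (degreeOf_pow_le _ _ _).trans ?_
  have : degreeOf j (C ((m.choose i : k)⁻¹) * esymm (Fin m) k i) ≤ 1 :=
    (degreeOf_C_mul_le _ _ _).trans (degreeOf_esymm _ _ _)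
  simpa using Nat.mul_le_mul_left _ this

lemma alf_inj [CharZero k] (m n : ℕ) (p : MvPolynomial (Fin (m + 1)) k) (hp : p.IsHomogeneous n)
    (h : alf k m p = 0) : p = 0 := by
  set q : MvPolynomial (Fin m) k := aeval (Fin.cons 1
    (fun i : Fin m => C ((m.choose (i + 1) : k)⁻¹) * X i) : Fin (m + 1) → MvPolynomial (Fin m) k) p
    with hq
  have h1 : aeval (fun i : Fin m => esymm (Fin m) k (i + 1)) q = alf k m p := by
    rw [hq, ← AlgHom.comp_apply]
    congr 1
    ext1 i
    refine Fin.cases ?_ (fun i => ?_) i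
    · simp [alf_X]
    · simp [alf_X]
  have h2 : q = 0 := by
    have hi := esymmAlgHom_fin_injective k (le_refl m)
    apply hi
    apply Subtype.ext
    rw [esymmAlgHom_apply, h1, h]; simp
  have h3 : ∀ y : Fin (m + 1) → k, y 0 = 1 → eval y p = 0 := by
    intro y hy
    have : eval y p = eval (fun i : Fin m => (m.choose (i + 1) : k) * y i.succ) q := by
      rw [hq, ← coe_aeval_eq_eval, ← coe_aeval_eq_eval, RingHom.coe_coe, RingHom.coe_coe,
        ← AlgHom.comp_apply]
      congr 1
      ext1 i
      refine Fin.cases ?_ (fun i => ?_) i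
      · simp [hy]
      · have z1 : (m.choose (i + 1) : k) ≠ 0 := by
          exact_mod_cast (Nat.choose_pos (by omega : (i : ℕ) + 1 ≤ m)).ne'
        simp [z1]
    rw [this, h2, map_zero]
  have h4 : X 0 * p = 0 := by
    apply MvPolynomial.funext
    intro y
    rw [map_mul, eval_X, map_zero]
    by_cases hy : y 0 = 0
    · rw [hy, zero_mul]
    · have h5 := h3 ((y 0)⁻¹ • y) (by simp [hy])
      have h6 : eval ((y 0)⁻¹ • y) p = (y 0)⁻¹ ^ n * eval y p := by
        rw [eval_eq, eval_eq, Finset.mul_sum]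
        refine Finset.sum_congr rfl fun d hd => ?_
        have hd' := hp (mem_support_iff.1 hd)
        simp only [Finsupp.weight_apply, Finsupp.sum, Pi.one_apply, smul_eq_mul, mul_one] at hd'
        simp only [Pi.smul_apply, smul_eq_mul, mul_pow, Finset.prod_mul_distrib,
          Finset.prod_pow_eq_pow_sum, hd']
        ring
      rw [h6] at h5
      rcases mul_eq_zero.1 h5 with h7 | h7
      · exact absurd h7 (pow_ne_zero _ (inv_ne_zero hy))
      · rw [h7, mul_zero]
  rcases mul_eq_zero.1 h4 with h5 | h5
  · exact absurd h5 (X_ne_zero 0)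
  · exact h5

end HermAux
namespace HermAux

variable {k : Type} [Field k]

/-- the Vandermonde determinant -/
def vd (k : Type) [Field k] (m : ℕ) : MvPolynomial (Fin m) k :=
  (Matrix.vandermonde (fun i : Fin m => (X i : MvPolynomial (Fin m) k))).det

lemma vd_rename (m : ℕ) (σ : Equiv.Perm (Fin m)) :
    rename σ (vd k m) = ((Equiv.Perm.sign σ : ℤ) : k) • vd k m := by
  rw [vd, AlgHom.map_det]
  have : (rename σ : MvPolynomial (Fin m) k →ₐ[k] MvPolynomial (Fin m) k).mapMatrix
      (Matrix.vandermonde (fun i : Fin m => (X i : MvPolynomial (Fin m) k))) =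
      (Matrix.vandermonde (fun i : Fin m => (X i : MvPolynomial (Fin m) k))).submatrix σ id := by
    ext1 i j
    simp [Matrix.vandermonde_apply]
  rw [this, Matrix.det_permute, smul_eq_C_mul, map_intCast]

lemma vd_ne (m : ℕ) : vd k m ≠ 0 := by
  rw [vd, Matrix.det_vandermonde_ne_zero_iff]
  exact X_injective

lemma vd_degreeOf (m : ℕ) (j : Fin m) : degreeOf j (vd k m) ≤ m - 1 := by
  rw [vd, Matrix.det_apply]
  refine (degreeOf_sum_le _ _ _).trans (Finset.sup_le fun σ _ => ?_)
  have h : degreeOf j (∏ i, Matrix.vandermonde (fun i : Fin m => (X i : MvPolynomial (Fin m) k)) (σ i) i)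
      ≤ m - 1 := by
    refine (degreeOf_prod_le _ _ _).trans ?_
    have : ∀ i, degreeOf j (Matrix.vandermonde (fun i : Fin m => (X i : MvPolynomial (Fin m) k)) (σ i) i)
        ≤ if i = σ.symm j then m - 1 else 0 := by
      intro i
      rw [Matrix.vandermonde_apply]
      refine (degreeOf_pow_le _ _ _).trans ?_
      rw [degreeOf_X]
      by_cases hi : i = σ.symm j
      · subst hi
        have := (σ.symm j).2
        simp; omega
      · have : j ≠ σ i := by rintro rfl; simp at hi
        simp [this]
    refine (Finset.sum_le_sum fun i _ => this i).trans ?_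
    simp
  rcases Int.units_eq_one_or (Equiv.Perm.sign σ) with h1 | h1
  · rw [h1, one_smul]; exact h
  · rw [h1, Units.neg_smul, one_smul, degreeOf_neg]; exact h

lemma logder {A : Type} [CommRing A] [Algebra k A] (D : Derivation k A A) {ι : Type}
    (s : Finset ι) (f g : ι → A) (h : ∀ i ∈ s, D (f i) = f i * g i) :
    D (∏ i ∈ s, f i) = (∏ i ∈ s, f i) * ∑ i ∈ s, g i := by
  classical
  induction s using Finset.induction_on with
  | empty => simp
  | insert a s ha ih =>
    rw [Finset.prod_insert ha, Derivation.leibniz, ih fun i hi => h i (Finset.mem_insert_of_mem hi),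
      Finset.sum_insert ha, h a (Finset.mem_insert_self _ _), smul_eq_mul, smul_eq_mul]
    ring

lemma sum_pairs {R : Type} [CommRing R] (m : ℕ) (h : Fin m → R) :
    ∑ i, ∑ j ∈ Finset.Ioi i, (h i + h j) = ((m : R) - 1) * ∑ i, h i := by
  simp only [Finset.sum_add_distrib]
  rw [Finset.sum_comm' (s := Finset.univ) (t := fun i => Finset.Ioi i) (t' := Finset.univ)
    (s' := fun j => Finset.Iio j) (f := fun i j => h j) (by simp)]
  rw [← Finset.sum_add_distrib, Finset.mul_sum]
  refine Finset.sum_congr rfl fun i _ => ?_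
  rw [Finset.sum_const, Finset.sum_const, Fin.card_Ioi, Fin.card_Iio, nsmul_eq_mul, nsmul_eq_mul,
    ← add_mul, ← Nat.cast_add]
  congr 1
  have : m - 1 - (i : ℕ) + i = m - 1 := by omega
  rw [this, Nat.cast_sub (by have := i.2; omega)]
  simp

lemma dlt_vd (m : ℕ) (M : Matrix (Fin 2) (Fin 2) k) :
    dlt m M (vd k m) = - (((m : MvPolynomial (Fin m) k) - 1) * mu m M) * vd k m := by
  have h1 := logder (dlt m M) Finset.univ
    (fun i : Fin m => ∏ j ∈ Finset.Ioi i, (X j - X i : MvPolynomial (Fin m) k))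
    (fun i => ∑ j ∈ Finset.Ioi i, ((C (M 0 0) - C (M 0 1) * X i) + (C (M 0 0) - C (M 0 1) * X j)))
    (fun i _ => by
      apply logder
      intro j _
      rw [map_sub, dlt_X, dlt_X, C_mul, map_ofNat]
      ring)
  rw [vd, Matrix.det_vandermonde, h1, sum_pairs, mu]
  have : ∑ i : Fin m, (C (M 0 0) - C (M 0 1) * X i : MvPolynomial (Fin m) k) =
      - ∑ i, (C (M 0 1) * X i - C (M 0 0)) := by
    rw [← Finset.sum_neg_distrib]; simp
  rw [this]; ring

lemma dop_vd (m n : ℕ) (hm : 0 < m) (M : Matrix (Fin 2) (Fin 2) k) (g : MvPolynomial (Fin m) k) :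
    dlt m M (vd k m * g) + ((n + m - 1 : ℕ) : k) • (mu m M * (vd k m * g)) =
      vd k m * (dlt m M g + (n : k) • (mu m M * g)) := by
  rw [Derivation.leibniz, dlt_vd, Nat.cast_sub (by omega), smul_eq_C_mul, smul_eq_C_mul]
  simp only [C_sub, map_natCast, C_1, smul_eq_mul, Nat.cast_add, Nat.cast_one, C_add]
  ring

end HermAux
namespace HermAux

variable {k : Type} [Field k]

lemma finrank_hom (m n : ℕ) :
    finrank k (homogeneousSubmodule (Fin (m + 1)) k n) = (n + m).choose n := by
  have h : homogeneousSubmodule (Fin (m + 1)) k n = restrictSupport k {d | d.degree = n} :=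
    homogeneousSubmodule_eq_finsupp_supported (Fin (m + 1)) k n
  rw [h, Module.finrank_eq_nat_card_basis (basisRestrictSupport k _)]
  have e : Sym (Fin (m + 1)) n ≃ ({d | d.degree = n} : Set (Fin (m + 1) →₀ ℕ)) :=
    Sym.equivNatSum (Fin (m + 1)) n
  rw [← Nat.card_congr e, Sym.natCard_sym_eq_choose, Nat.card_fin]
  congr 1; omega

lemma polyAct_mem {N : Type} [Fintype N] [DecidableEq N] (A : Matrix N N k) (n : ℕ) (hn : 0 < n)
    (p : MvPolynomial N k) (hp : p.IsHomogeneous n) : (polyAct A p).IsHomogeneous n := by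
  rw [polyAct_apply]
  refine IsHomogeneous.sum _ _ _ fun i _ => IsHomogeneous.sum _ _ _ fun j _ => ?_
  rw [smul_eq_C_mul]
  refine IsHomogeneous.C_mul ?_ _
  have := (isHomogeneous_X k i).mul (hp.pderiv (i := j))
  rwa [show 1 + (n - 1) = n by omega] at this

/-- Hermite map -/
def herm (k : Type) [Field k] (m n : ℕ) : homogeneousSubmodule (Fin (m + 1)) k n →ₗ[k]
    homogeneousSubmodule (Fin (n + 1)) k m :=
  LinearMap.codRestrict _
    (toPoly ∘ₗ tens m n ∘ₗ (alf k m).toLinearMap ∘ₗ Submodule.subtype _)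
    (fun _ => toPoly_mem _)

lemma herm_coe (m n : ℕ) (p : homogeneousSubmodule (Fin (m + 1)) k n) :
    (herm k m n p : MvPolynomial (Fin (n + 1)) k) = toPoly (tens m n (alf k m p)) := rfl

lemma herm_inj [CharZero k] (m n : ℕ) : Function.Injective (herm k m n) := by
  rw [← LinearMap.ker_eq_bot, LinearMap.ker_eq_bot']
  intro p hp
  have h1 := congrArg (Submodule.subtype _) hp
  simp only [Submodule.subtype_apply, herm_coe, Submodule.coe_zero] at h1
  apply Subtype.ext
  refine alf_inj m n _ p.2 (tens_inj m n _ (alf_degreeOf m n _ p.2) (toPoly_inj _ ?_ h1))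
  intro a σ
  have := tens_perm m n (alf k m p) 1 σ (by rw [alf_symm, one_smul]) (a ∘ σ)
  rw [this, one_mul]
  rw [show (a ∘ σ) ∘ σ.symm = a by funext l; simp]

lemma herm_act [CharZero k] (m n : ℕ) (M : Matrix (Fin 2) (Fin 2) k) (hM : M 1 1 = - M 0 0)
    (p : homogeneousSubmodule (Fin (m + 1)) k n)
    (hq : polyAct (matSym m M) (p : MvPolynomial (Fin (m + 1)) k) ∈
      homogeneousSubmodule (Fin (m + 1)) k n) :
    (herm k m n ⟨_, hq⟩ : MvPolynomial (Fin (n + 1)) k) = polyAct (matSym n M) (herm k m n p) := by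
  rw [herm_coe, herm_coe, alf_act m n M hM _ p.2, tens_dop m n M hM _ (alf_degreeOf m n _ p.2),
    toPoly_tact]

/-- the exterior map -/
def omg (k : Type) [Field k] (m n : ℕ) : homogeneousSubmodule (Fin (m + 1)) k n →ₗ[k]
    ({s : Finset (Fin (n + m - 1 + 1)) // s.card = m} → k) :=
  LinearMap.funLeft k k srt ∘ₗ tens m (n + m - 1) ∘ₗ LinearMap.mulLeft k (vd k m) ∘ₗ
    (alf k m).toLinearMap ∘ₗ Submodule.subtype _

lemma omg_apply (m n : ℕ) (p : homogeneousSubmodule (Fin (m + 1)) k n)  :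
    omg k m n p = fun S => tens m (n + m - 1) (vd k m * alf k m p) (srt S) := rfl

lemma omg_alt (m n : ℕ) (p : MvPolynomial (Fin (m + 1)) k) :
    Alt (tens m (n + m - 1) (vd k m * alf k m p)) := by
  intro a σ
  have := tens_perm m (n + m - 1) (vd k m * alf k m p) ((Equiv.Perm.sign σ : ℤ) : k) σ
    (by rw [map_mul, vd_rename, alf_symm, smul_mul_assoc]) (a ∘ σ)
  rw [this]
  rw [show (a ∘ σ) ∘ σ.symm = a by funext l; simp]

lemma omg_deg (m n : ℕ) (hm : 0 < m) (p : homogeneousSubmodule (Fin (m + 1)) k n) (j : Fin m) :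
    degreeOf j (vd k m * alf k m p) ≤ n + m - 1 := by
  refine (degreeOf_mul_le _ _ _).trans ?_
  have h1 := vd_degreeOf (k := k) m j
  have h2 := alf_degreeOf m n _ p.2 j
  omega

lemma omg_inj [CharZero k] (m n : ℕ) (hm : 0 < m) : Function.Injective (omg k m n) := by
  rw [← LinearMap.ker_eq_bot, LinearMap.ker_eq_bot']
  intro p hp
  have h1 : tens m (n + m - 1) (vd k m * alf k m p) = 0 := by
    have hA := omg_alt m n (p : MvPolynomial (Fin (m + 1)) k)
    rw [omg_apply] at hp
    generalize tens m (n + m - 1) (vd k m * alf k m p) = c at hA hp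
    exact alt_inj c hA fun T => congrFun hp T
  have h2 := tens_inj m _ _ (omg_deg m n hm p) h1
  rcases mul_eq_zero.1 h2 with h3 | h3
  · exact absurd h3 (vd_ne m)
  · exact Subtype.ext (alf_inj m n _ p.2 h3)

lemma omg_act [CharZero k] (m n : ℕ) (hm : 0 < m) (M : Matrix (Fin 2) (Fin 2) k)
    (hM : M 1 1 = - M 0 0) (p : homogeneousSubmodule (Fin (m + 1)) k n)
    (hq : polyAct (matSym m M) (p : MvPolynomial (Fin (m + 1)) k) ∈
      homogeneousSubmodule (Fin (m + 1)) k n) :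
    omg k m n ⟨_, hq⟩ =
      Matrix.mulVecLin (Matrix.of (extMat m (matSym (n + m - 1) M))) (omg k m n p) := by
  funext T
  rw [omg_apply, omg_apply]
  have h := ext_tact (matSym (n + m - 1) M) _ (omg_alt m n p) T
  rw [← tens_dop m (n + m - 1) M hM _ (omg_deg m n hm p), dop_vd m n hm,
    ← alf_act m n M hM _ p.2] at h
  exact h.symm

lemma bij_herm [CharZero k] (m n : ℕ) : Function.Bijective (herm k m n) := by
  have : Module.Finite k (homogeneousSubmodule (Fin (m + 1)) k n) :=
    Module.Finite.iff_fg.2 (homogeneousSubmodule_fg _ _ _)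
  have : Module.Finite k (homogeneousSubmodule (Fin (n + 1)) k m) :=
    Module.Finite.iff_fg.2 (homogeneousSubmodule_fg _ _ _)
  refine ⟨herm_inj m n, ?_⟩
  rw [← LinearMap.injective_iff_surjective_of_finrank_eq_finrank]
  · exact herm_inj m n
  · rw [finrank_hom, finrank_hom, add_comm m n, Nat.choose_symm_add]

lemma bij_omg [CharZero k] (m n : ℕ) (hm : 0 < m) : Function.Bijective (omg k m n) := by
  have : Module.Finite k (homogeneousSubmodule (Fin (m + 1)) k n) :=
    Module.Finite.iff_fg.2 (homogeneousSubmodule_fg _ _ _)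
  refine ⟨omg_inj m n hm, ?_⟩
  rw [← LinearMap.injective_iff_surjective_of_finrank_eq_finrank]
  · exact omg_inj m n hm
  · rw [finrank_hom, Module.finrank_fintype_fun_eq_card, Fintype.card_finset_len, Fintype.card_fin,
      Nat.choose_symm_add]
    congr 1; omega

end HermAux

open HermAux

theorem hermite_reciprocity_and_exterior_symmetric
    (k V : Type) [Field k] [IsAlgClosed k] [CharZero k]
    [AddCommGroup V] [Module k V] [FiniteDimensional k V]
    (hdim : finrank k V = 2) (b : Basis (Fin 2) k V)
    (m n : ℕ) (hm : 0 < m) (hn : 0 < n) :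
    -- Hermite reciprocity: S^n(S^m(V)) ≅ S^m(S^n(V)) as sl(V)-modules.
    -- S^n(S^m V) is modelled as the space of homogeneous polynomials of degree
    -- n in m+1 variables (= dim S^m V), with x ∈ sl(V) acting through the
    -- derivation action of the matrix of its action on S^m V, and similarly
    -- for S^m(S^n V).
    (∃ φ : (homogeneousSubmodule (Fin (m + 1)) k n) ≃ₗ[k]
        (homogeneousSubmodule (Fin (n + 1)) k m),
      ∀ (x : Module.End k V), LinearMap.trace k V x = 0 →
        ∀ (p : homogeneousSubmodule (Fin (m + 1)) k n)
          (hq : polyAct (matSym m (LinearMap.toMatrix b b x)) (p : MvPolynomial (Fin (m+1)) k)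
              ∈ homogeneousSubmodule (Fin (m + 1)) k n),
          (φ ⟨polyAct (matSym m (LinearMap.toMatrix b b x)) (p : MvPolynomial (Fin (m+1)) k), hq⟩ :
              MvPolynomial (Fin (n + 1)) k) =
            polyAct (matSym n (LinearMap.toMatrix b b x))
              ((φ p : homogeneousSubmodule (Fin (n+1)) k m) : MvPolynomial (Fin (n + 1)) k)) ∧
    -- Λ^m(S^{n+m−1}(V)) ≅ S^m(S^n(V)) as sl(V)-modules.
    -- Λ^m(S^{n+m−1} V) is modelled on the free space on the m-element subsets
    -- of a basis of S^{n+m−1}(V) (a space of dimension n+m = (n+m−1)+1),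
    -- with x ∈ sl(V) acting by the derivative of the minor action.
    (∃ ψ : ({s : Finset (Fin (n + m - 1 + 1)) // s.card = m} → k) →ₗ[k]
        MvPolynomial (Fin (n + 1)) k,
      Function.Injective ψ ∧
      LinearMap.range ψ = homogeneousSubmodule (Fin (n + 1)) k m ∧
      ∀ (x : Module.End k V), LinearMap.trace k V x = 0 →
        ∀ v : {s : Finset (Fin (n + m - 1 + 1)) // s.card = m} → k,
          ψ ((Matrix.mulVecLin (Matrix.of
              (extMat m (matSym (n + m - 1) (LinearMap.toMatrix b b x))))) v) =
            polyAct (matSym n (LinearMap.toMatrix b b x)) (ψ v)) := by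
  have hM : ∀ x : Module.End k V, LinearMap.trace k V x = 0 →
      LinearMap.toMatrix b b x 1 1 = - LinearMap.toMatrix b b x 0 0 := by
    intro x hx
    rw [LinearMap.trace_eq_matrix_trace k b, Matrix.trace_fin_two] at hx
    linear_combination hx
  refine ⟨⟨LinearEquiv.ofBijective (herm k m n) (bij_herm m n), ?_⟩, ?_⟩
  · intro x hx p hq
    exact herm_act m n _ (hM x hx) p hq
  · set e := LinearEquiv.ofBijective (omg k m n) (bij_omg m n hm) with he
    refine ⟨Submodule.subtype _ ∘ₗ herm k m n ∘ₗ e.symm.toLinearMap, ?_, ?_, ?_⟩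
    · exact (Submodule.injective_subtype _).comp ((herm_inj m n).comp e.symm.injective)
    · rw [LinearMap.range_comp, LinearMap.range_eq_top.2, Submodule.map_top, Submodule.range_subtype]
      exact (bij_herm m n).2.comp e.symm.surjective
    · intro x hx v
      obtain ⟨p, rfl⟩ := e.surjective v
      have hq := polyAct_mem (matSym m (LinearMap.toMatrix b b x)) n hn _ p.2
      have h1 := omg_act m n hm _ (hM x hx) p hq
      have h2 : ∀ q, e q = omg k m n q := fun q => rfl
      rw [h2, ← h1, ← h2]
      simp only [LinearMap.comp_apply, LinearEquiv.coe_coe, LinearEquiv.symm_apply_apply,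
        Submodule.subtype_apply, h2]
      rw [← h2, ← h2, LinearEquiv.symm_apply_apply, LinearEquiv.symm_apply_apply]
      exact herm_act m n _ (hM x hx) p hq
end
end

section
/- Suppose λ is a minuscule dominant weight. Then D_λ(q) = t_0(q)/t_λ(q) = ∏_{i=1}^l (1 − q^{d_i})/(1 − q^{d_i(W_λ)}), where d_1,…,d_l are the degrees of the basic invariants of W and d_1(W_λ),…,d_l(W_λ) those of the stabilizer W_λ. -/
/-!
STATEMENT 12: If λ is a minuscule dominant weight, then
  D_λ(q) = t_0(q)/t_λ(q) = ∏_{i=1}^l (1 − q^{d_i}) / (1 − q^{d_i(W_λ)}),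
where d_1, …, d_l are the degrees of the basic invariants of the Weyl group W
and d_1(W_λ), …, d_l(W_λ) those of the stabilizer W_λ of λ.

Encoding: the root system is encoded combinatorially as in the other
statements of this series.  The Dynkin polynomial D_λ is encoded through its
coefficients via Kostant's multiplicity formula; t_μ(q) = Σ_{w ∈ W_μ} q^{ℓ(w)}
(`tpoly`) where ℓ(w) = #{α ∈ Δ+ : wα ∈ −Δ+} is the length function, so that
t_0(q) corresponds to W itself (every linear map fixes 0).  The degrees
d_i resp. d_i(W_λ) of the basic invariants (l = dim E = rk g of them) are
characterized, as in the paper (Eq. (3.2), after Solomon), by the identities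
t_0(q)(1−q)^l = ∏ (1−q^{d_i}) and t_λ(q)(1−q)^l = ∏ (1−q^{d_i(W_λ)}).  Both
asserted equalities are stated denominator-free.
-/


noncomputable section

namespace RootCW

open Polynomial

variable {E : Type} [AddCommGroup E] [Module ℚ E]

/-- The coroot pairing ⟨v, α∨⟩ = 2(v,α)/(α,α) determined by the invariant
form B. -/
def cpair (B : E →ₗ[ℚ] E →ₗ[ℚ] ℚ) (a : E) (v : E) : ℚ :=
  2 * B v a / B a a

/-- The reflection in the root `a` (as a linear map): v ↦ v − ⟨v,a∨⟩a. -/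
def reflMap (B : E →ₗ[ℚ] E →ₗ[ℚ] ℚ) (a : E) : E →ₗ[ℚ] E :=
  LinearMap.id - (2 / B a a) • ((B.flip a).smulRight a)

lemma reflMap_apply (B : E →ₗ[ℚ] E →ₗ[ℚ] ℚ) (a v : E) :
    reflMap B a v = v - (cpair B a v) • a := by
  simp only [reflMap, cpair, LinearMap.sub_apply, LinearMap.id_apply,
    LinearMap.smul_apply, LinearMap.smulRight_apply, LinearMap.flip_apply,
    smul_smul]
  ring_nf

lemma reflMap_involutive (B : E →ₗ[ℚ] E →ₗ[ℚ] ℚ) (a : E) (ha : B a a ≠ 0) :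
    Function.Involutive (reflMap B a) := by
  intro v
  rw [reflMap_apply, reflMap_apply]
  have hBa : cpair B a (v - cpair B a v • a) = - cpair B a v := by
    simp only [cpair, map_sub, map_smul, LinearMap.sub_apply, LinearMap.smul_apply,
      smul_eq_mul]
    field_simp
    ring
  rw [hBa, neg_smul, sub_neg_eq_add, sub_add_cancel]

/-- The reflection in the root `a`, as a linear automorphism of E. -/
def refl (B : E →ₗ[ℚ] E →ₗ[ℚ] ℚ) (a : E) (ha : B a a ≠ 0) : E ≃ₗ[ℚ] E :=
  LinearEquiv.ofInvolutive (reflMap B a) (reflMap_involutive B a ha)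

variable {ι : Type} [Fintype ι]

/-- The Weyl group: the subgroup of GL(E) generated by the reflections in the
(positive) roots `α i`. -/
def weylGroup (B : E →ₗ[ℚ] E →ₗ[ℚ] ℚ) (α : ι → E)
    (hne : ∀ i, B (α i) (α i) ≠ 0) : Subgroup (E ≃ₗ[ℚ] E) :=
  Subgroup.closure (Set.range fun i => refl B (α i) (hne i))

/-- Kostant's partition function: the number of ways of writing `v` as a sum of
positive roots. -/
def kostant (α : ι → E) (v : E) : ℕ :=
  Nat.card {f : ι → ℕ // ∑ i, (f i) • α i = v}

/-- ρ, the half sum of the positive roots. -/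
def rho (α : ι → E) : E := (2⁻¹ : ℚ) • ∑ i, α i

/-- The weight multiplicity m_λ^μ of the weight μ in the simple module of
highest weight λ, given by Kostant's multiplicity formula. -/
def wtMult (B : E →ₗ[ℚ] E →ₗ[ℚ] ℚ) (α : ι → E)
    (hne : ∀ i, B (α i) (α i) ≠ 0) (lam mu : E) : ℚ :=
  ∑ᶠ w : weylGroup B α hne,
    (LinearMap.det ((w : E ≃ₗ[ℚ] E) : E →ₗ[ℚ] E)) *
      (kostant α ((w : E ≃ₗ[ℚ] E) (lam + rho α) - mu - rho α) : ℚ)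

/-- The q-analogue P_q of Kostant's partition function, defined by
∏_{α ∈ Δ+} 1/(1 − q e^α) = Σ_ν P_q(ν) e^ν. -/
def kostantq (α : ι → E) (v : E) : Polynomial ℚ :=
  ∑ᶠ f ∈ {f : ι → ℕ | ∑ i, (f i) • α i = v}, (X : Polynomial ℚ) ^ (∑ i, f i)

/-- Lusztig's q-analogue m_λ^μ(q) = Σ_{w ∈ W} det(w) P_q(w(λ+ρ) − μ − ρ) of the
weight multiplicity. -/
def wtMultq (B : E →ₗ[ℚ] E →ₗ[ℚ] ℚ) (α : ι → E)
    (hne : ∀ i, B (α i) (α i) ≠ 0) (lam mu : E) : Polynomial ℚ :=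
  ∑ᶠ w : weylGroup B α hne,
    (LinearMap.det ((w : E ≃ₗ[ℚ] E) : E →ₗ[ℚ] E)) •
      kostantq α ((w : E ≃ₗ[ℚ] E) (lam + rho α) - mu - rho α)

/-- The height function ht(ν) = (ν, ρ∨) = ½ Σ_{α ∈ Δ+} ⟨ν, α∨⟩. -/
def htq (B : E →ₗ[ℚ] E →ₗ[ℚ] ℚ) (α : ι → E) (v : E) : ℚ :=
  (∑ i, cpair B (α i) v) / 2

/-- A dominant weight: one pairing nonnegatively with every positive coroot. -/
def IsDominant (B : E →ₗ[ℚ] E →ₗ[ℚ] ℚ) (α : ι → E) (v : E) : Prop :=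
  ∀ i, 0 ≤ cpair B (α i) v

/-- The length of a Weyl group element: the number of positive roots made
negative. -/
def len (α : ι → E) (w : E ≃ₗ[ℚ] E) : ℕ :=
  Nat.card {i : ι // ∃ j, w (α i) = - α j}

/-- The Poincaré polynomial t_μ(q) = Σ_{w ∈ W_μ} q^{ℓ(w)} of the stabilizer
W_μ of μ in W; for μ = 0 this is t_0(q) = Σ_{w ∈ W} q^{ℓ(w)}. -/
def tpoly (B : E →ₗ[ℚ] E →ₗ[ℚ] ℚ) (α : ι → E)
    (hne : ∀ i, B (α i) (α i) ≠ 0) (mu : E) : Polynomial ℚ :=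
  ∑ᶠ w ∈ {w : weylGroup B α hne | (w : E ≃ₗ[ℚ] E) mu = mu},
    (X : Polynomial ℚ) ^ (len α (w : E ≃ₗ[ℚ] E))

end RootCW

open RootCW Polynomial Module

structure RD (E ι : Type) [AddCommGroup E] [Module ℚ E] [Fintype ι] where
  B : E →ₗ[ℚ] E →ₗ[ℚ] ℚ
  hsym : ∀ x y : E, B x y = B y x
  hpos : ∀ v : E, v ≠ 0 → 0 < B v v
  a : ι → E
  inj : Function.Injective a
  hne : ∀ i, B (a i) (a i) ≠ 0
  hint : ∀ i j, ∃ z : ℤ, cpair B (a i) (a j) = (z : ℚ)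
  hperm : ∀ i j, (∃ l, refl B (a i) (hne i) (a j) = a l) ∨
      (∃ l, refl B (a i) (hne i) (a j) = - a l)
  φ : E →ₗ[ℚ] ℚ
  hφ : ∀ i, 0 < φ (a i)

namespace RD
variable {E ι : Type} [AddCommGroup E] [Module ℚ E] [Fintype ι] (R : RD E ι)

abbrev W : Subgroup (E ≃ₗ[ℚ] E) := weylGroup R.B R.a R.hne
abbrev s (i : ι) : E ≃ₗ[ℚ] E := refl R.B (R.a i) (R.hne i)
abbrev c (i : ι) (v : E) : ℚ := cpair R.B (R.a i) v
def Neg (w : E ≃ₗ[ℚ] E) (i : ι) : Prop := ∃ j, w (R.a i) = - R.a j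

lemma a_ne (i : ι) : R.a i ≠ 0 := by
  intro h; have := R.hφ i; rw [h] at this; simp at this

lemma norm_pos (i : ι) : 0 < R.B (R.a i) (R.a i) := R.hpos _ (R.a_ne i)

lemma norm_nonneg (v : E) : 0 ≤ R.B v v := by
  by_cases h : v = 0
  · simp [h]
  · exact (R.hpos v h).le

lemma norm_eq_zero {v : E} (h : R.B v v ≤ 0) : v = 0 := by
  by_contra h'
  exact absurd (R.hpos v h') (not_lt.2 h)

lemma s_apply (i : ι) (v : E) : R.s i v = v - R.c i v • R.a i :=
  reflMap_apply R.B (R.a i) v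

lemma c_eq (i : ι) (v : E) : R.c i v = 2 * R.B v (R.a i) / R.B (R.a i) (R.a i) := rfl

lemma c_mul (i : ι) (v : E) : R.c i v * R.B (R.a i) (R.a i) = 2 * R.B v (R.a i) := by
  rw [c_eq, div_mul_cancel₀ _ (R.hne i)]

lemma c_add (i : ι) (u v : E) : R.c i (u + v) = R.c i u + R.c i v := by
  simp only [c_eq, map_add, LinearMap.add_apply]; ring
lemma c_sub (i : ι) (u v : E) : R.c i (u - v) = R.c i u - R.c i v := by
  simp only [c_eq, map_sub, LinearMap.sub_apply]; ring
lemma c_neg (i : ι) (v : E) : R.c i (-v) = - R.c i v := by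
  simp only [c_eq, map_neg, LinearMap.neg_apply]; ring
lemma c_smul (i : ι) (t : ℚ) (v : E) : R.c i (t • v) = t * R.c i v := by
  simp only [c_eq, map_smul, LinearMap.smul_apply, smul_eq_mul]; ring
lemma c_sum {κ : Type} (i : ι) (t : Finset κ) (f : κ → E) :
    R.c i (∑ k ∈ t, f k) = ∑ k ∈ t, R.c i (f k) := by
  simp only [c_eq, map_sum, LinearMap.sum_apply, Finset.mul_sum, Finset.sum_div]
lemma c_self (i : ι) : R.c i (R.a i) = 2 := by
  rw [c_eq, mul_div_assoc, div_self (R.hne i), mul_one]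

lemma c_pos_iff (i : ι) (v : E) : 0 < R.c i v ↔ 0 < R.B v (R.a i) := by
  have := R.c_mul i v
  have h := R.norm_pos i
  constructor
  · intro h1; have := mul_pos h1 h; linarith
  · intro h1; rw [c_eq]; positivity

lemma c_nonneg_iff (i : ι) (v : E) : 0 ≤ R.c i v ↔ 0 ≤ R.B v (R.a i) := by
  have := R.c_mul i v
  have h := R.norm_pos i
  constructor
  · intro h1; have := mul_nonneg h1 h.le; linarith
  · intro h1; rw [c_eq]; positivity

lemma s_self (i : ι) : R.s i (R.a i) = - R.a i := by
  rw [s_apply, c_self, two_smul]; abel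

lemma s_s (i : ι) (v : E) : R.s i (R.s i v) = v := reflMap_involutive R.B _ (R.hne i) v

lemma s_mul_s (i : ι) : R.s i * R.s i = 1 := by
  ext v; exact R.s_s i v

lemma s_inv (i : ι) : (R.s i)⁻¹ = R.s i := inv_eq_of_mul_eq_one_left (R.s_mul_s i)

lemma s_isom (i : ι) (x y : E) : R.B (R.s i x) (R.s i y) = R.B x y := by
  rw [s_apply, s_apply]
  simp only [map_sub, map_smul, LinearMap.sub_apply, LinearMap.smul_apply, smul_eq_mul]
  have h1 := R.c_mul i x
  have h2 := R.c_mul i y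
  rw [R.hsym (R.a i) y]
  linear_combination (R.c i x) / 2 * h2 + (R.c i y) / 2 * h1

lemma s_mem (i : ι) : R.s i ∈ R.W := Subgroup.subset_closure ⟨i, rfl⟩

lemma W_induction {p : (E ≃ₗ[ℚ] E) → Prop} (h1 : p 1)
    (hs : ∀ i w, w ∈ R.W → p w → p (R.s i * w)) {w : E ≃ₗ[ℚ] E} (hw : w ∈ R.W) : p w := by
  refine Subgroup.closure_induction_left (p := fun x _ => p x) h1 ?_ ?_ hw
  · rintro _ ⟨i, rfl⟩ y hy h; exact hs i y hy h
  · rintro _ ⟨i, rfl⟩ y hy h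
    have := hs i y hy h
    rw [← R.s_inv i] at this; exact this

lemma isom {w : E ≃ₗ[ℚ] E} (hw : w ∈ R.W) (x y : E) : R.B (w x) (w y) = R.B x y := by
  refine R.W_induction (p := fun w => R.B (w x) (w y) = R.B x y) rfl ?_ hw
  intro i w _ h
  rw [LinearEquiv.mul_apply, LinearEquiv.mul_apply, s_isom, h]

lemma perm {w : E ≃ₗ[ℚ] E} (hw : w ∈ R.W) (j : ι) :
    (∃ l, w (R.a j) = R.a l) ∨ (∃ l, w (R.a j) = - R.a l) := by
  refine R.W_induction (p := fun w => (∃ l, w (R.a j) = R.a l) ∨ (∃ l, w (R.a j) = - R.a l))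
    (Or.inl ⟨j, rfl⟩) ?_ hw
  intro i w _ h
  simp only [LinearEquiv.mul_apply]
  rcases h with ⟨l, h⟩ | ⟨l, h⟩
  · rw [h]; exact R.hperm i l
  · rw [h, map_neg]
    rcases R.hperm i l with ⟨k, h⟩ | ⟨k, h⟩
    · right; exact ⟨k, by rw [h]⟩
    · left; exact ⟨k, by rw [h, neg_neg]⟩

lemma not_pos_neg {i j : ι} (h : R.a i = - R.a j) : False := by
  have h1 := R.hφ i
  have h2 := R.hφ j
  rw [h, map_neg] at h1; linarith

open Classical in
def sg (w : E ≃ₗ[ℚ] E) (i : ι) : ℚ := if R.Neg w i then -1 else 1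

lemma sg_neg {w : E ≃ₗ[ℚ] E} {i : ι} (h : R.Neg w i) : R.sg w i = -1 := if_pos h
lemma sg_pos {w : E ≃ₗ[ℚ] E} {i : ι} (h : ¬ R.Neg w i) : R.sg w i = 1 := if_neg h

lemma exists_perm {w : E ≃ₗ[ℚ] E} (hw : w ∈ R.W) :
    ∃ σ : Equiv.Perm ι, ∀ i, w (R.a i) = R.sg w i • R.a (σ i) := by
  have h : ∀ i, ∃ l, w (R.a i) = R.sg w i • R.a l := by
    intro i
    by_cases h : R.Neg w i
    · obtain ⟨l, hl⟩ := id h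
      exact ⟨l, by rw [R.sg_neg h, hl, neg_one_smul]⟩
    · rcases R.perm hw i with ⟨l, hl⟩ | h'
      · exact ⟨l, by rw [R.sg_pos h, hl, one_smul]⟩
      · exact absurd h' h
  choose f hf using h
  have hinj : Function.Injective f := by
    intro i j hij
    have hi := hf i
    have hj := hf j
    rw [hij] at hi
    apply R.inj
    by_cases h1 : R.Neg w i <;> by_cases h2 : R.Neg w j
    · rw [R.sg_neg h1] at hi; rw [R.sg_neg h2] at hj
      exact w.injective (hi.trans hj.symm)
    · rw [R.sg_neg h1] at hi; rw [R.sg_pos h2, one_smul] at hj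
      rw [← hj, neg_one_smul, ← map_neg] at hi
      exact (R.not_pos_neg (w.injective hi)).elim
    · rw [R.sg_pos h1] at hi; rw [R.sg_neg h2, neg_one_smul] at hj
      rw [one_smul, ← neg_eq_iff_eq_neg.2 hj, ← map_neg] at hi
      exact (R.not_pos_neg (w.injective hi)).elim
    · rw [R.sg_pos h1] at hi; rw [R.sg_pos h2] at hj
      exact w.injective (hi.trans hj.symm)
  exact ⟨Equiv.ofBijective f (Finite.injective_iff_bijective.1 hinj), hf⟩

lemma sg_sq (w : E ≃ₗ[ℚ] E) (i : ι) : R.sg w i * R.sg w i = 1 := by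
  unfold sg; split_ifs <;> norm_num

/-- transport of pairing -/
lemma c_w {w : E ≃ₗ[ℚ] E} (hw : w ∈ R.W) {i j : ι} {e : ℚ} (he : e * e = 1)
    (h : w (R.a i) = e • R.a j) (v : E) : R.c j (w v) = e * R.c i v := by
  have h1 : R.B (w v) (w (R.a i)) = R.B v (R.a i) := R.isom hw _ _
  have h2 : R.B (w (R.a i)) (w (R.a i)) = R.B (R.a i) (R.a i) := R.isom hw _ _
  rw [h] at h1 h2
  simp only [map_smul, LinearMap.smul_apply, smul_eq_mul] at h1 h2
  rw [← mul_assoc, he, one_mul] at h2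
  rw [c_eq, c_eq, ← h1, ← h2]
  linear_combination (-(2 * R.B (w v) (R.a j) / R.B (R.a j) (R.a j))) * he

open Classical in
lemma sum_sg (w : E ≃ₗ[ℚ] E) {M : Type} [AddCommGroup M] [Module ℚ M] (g : ι → M) :
    ∑ i, g i - ∑ i, R.sg w i • g i = (2:ℚ) • ∑ i with R.Neg w i, g i := by
  rw [← Finset.sum_sub_distrib, Finset.smul_sum, Finset.sum_filter]
  apply Finset.sum_congr rfl
  intro i _
  unfold sg
  split_ifs
  · rw [neg_one_smul, two_smul]; abel
  · simp

open Classical in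
lemma ht_sub {w : E ≃ₗ[ℚ] E} (hw : w ∈ R.W) (v : E) :
    htq R.B R.a v - htq R.B R.a (w v) = ∑ i with R.Neg w i, R.c i v := by
  obtain ⟨σ, hσ⟩ := R.exists_perm hw
  have h1 : ∑ i, R.c i (w v) = ∑ i, R.sg w i • R.c i v := by
    rw [← Equiv.sum_comp σ]
    apply Finset.sum_congr rfl
    intro i _
    exact R.c_w hw (R.sg_sq w i) (hσ i) v
  have h2 := R.sum_sg w (fun i => R.c i v)
  unfold htq
  change (∑ i, R.c i v) / 2 - (∑ i, R.c i (w v)) / 2 = _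
  rw [h1]
  rw [smul_eq_mul] at h2
  linarith

def ρ : E := rho R.a

open Classical in
lemma rho_sub {w : E ≃ₗ[ℚ] E} {σ : Equiv.Perm ι} 
    (hσ : ∀ i, w (R.a i) = R.sg w i • R.a (σ i)) :
    R.ρ - w R.ρ = ∑ i with R.Neg w i, R.a (σ i) := by
  have h2 := R.sum_sg w (fun i => R.a (σ i))
  unfold ρ rho
  rw [map_smul, map_sum]
  simp only [hσ]
  rw [← Equiv.sum_comp σ (fun i => R.a i), ← smul_sub, h2, smul_smul]
  norm_num

lemma neg_s_self (i : ι) : R.Neg (R.s i) i := ⟨i, R.s_self i⟩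

lemma rho_c_pos (i : ι) : 0 < R.c i R.ρ := by
  classical
  obtain ⟨σ, hσ⟩ := R.exists_perm (R.s_mem i)
  have h := R.rho_sub hσ
  rw [s_apply, sub_sub_cancel] at h
  have h2 := congrArg R.φ h
  rw [map_smul, map_sum, smul_eq_mul] at h2
  have h3 : 0 < ∑ j with R.Neg (R.s i) j, R.φ (R.a (σ j)) := by
    apply Finset.sum_pos
    · intro j _; exact R.hφ _
    · exact ⟨i, by simp [R.neg_s_self i]⟩
  rw [← h2] at h3
  exact pos_of_mul_pos_left h3 (R.hφ i).le

lemma rho_pos (i : ι) : 0 < R.B R.ρ (R.a i) := (R.c_pos_iff i _).1 (R.rho_c_pos i)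

/-- Cauchy–Schwarz, strict. -/
lemma cs {i j : ι} (hnp : ∀ t : ℚ, R.a j ≠ t • R.a i) : R.c i (R.a j) * R.c j (R.a i) < 4 := by
  have h := R.hpos (R.a j - (R.c i (R.a j) / 2) • R.a i) (sub_ne_zero.2 (hnp _))
  have h1 := R.c_mul i (R.a j)
  have h2 := R.c_mul j (R.a i)
  simp only [map_sub, map_smul, LinearMap.sub_apply, LinearMap.smul_apply, smul_eq_mul] at h
  rw [R.hsym (R.a i) (R.a j)] at h h2
  have hi := R.norm_pos i
  have hj := R.norm_pos j
  set x := R.c i (R.a j)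
  set y := R.c j (R.a i)
  have h3 : 0 < R.B (R.a j) (R.a j) * (4 - x * y) := by
    have : R.B (R.a j) (R.a j) * (4 - x * y) = 4 * R.B (R.a j) (R.a j) - x * (2 * R.B (R.a j) (R.a i)) := by
      rw [← h2]; ring
    rw [this]
    have h4 : x * (x * R.B (R.a i) (R.a i)) = x * (2 * R.B (R.a j) (R.a i)) := by rw [h1]
    linarith
  have := pos_of_mul_pos_right h3 hj.le
  linarith

def Simple (i : ι) : Prop := ∀ j, R.Neg (R.s i) j → ∃ t : ℚ, R.a j = t • R.a i

lemma decomp {i : ι} (h : ¬ R.Simple i) : ∃ j k, R.a i = R.a j + R.a k := by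
  unfold Simple at h
  push Not at h
  obtain ⟨j, ⟨k, hk⟩, hnp⟩ := h
  obtain ⟨x, hx⟩ := R.hint i j
  obtain ⟨y, hy⟩ := R.hint j i
  have hcs := R.cs hnp
  change R.c i (R.a j) = x at hx
  change R.c j (R.a i) = y at hy
  rw [s_apply] at hk
  -- a j + a k = x • a i
  have hsum : R.a j + R.a k = (x:ℚ) • R.a i := by
    rw [← hx, ← sub_eq_zero]; rw [← sub_eq_zero] at hk; rw [← hk]; abel
  have hxpos : 0 < (x:ℚ) := by
    have := congrArg R.φ hsum
    rw [map_add, map_smul, smul_eq_mul] at this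
    have h1 := R.hφ j
    have h2 := R.hφ k
    exact pos_of_mul_pos_left (by rw [← this]; linarith) (R.hφ i).le
  have hypos : 0 < (y:ℚ) := by
    rw [← hy, c_pos_iff, R.hsym, ← c_pos_iff, hx]; exact hxpos
  rw [hx, hy] at hcs
  norm_cast at hcs hxpos hypos
  have hx3 : x ≤ 3 := by nlinarith
  have hcase : x = 1 ∨ (y = 1 ∧ (x = 2 ∨ x = 3)) := by
    by_cases h1 : x = 1
    · exact Or.inl h1
    · right
      have : y = 1 := by nlinarith [show 2 ≤ x by omega]
      exact ⟨this, by omega⟩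
  rcases hcase with rfl | ⟨rfl, hx23⟩
  · exact ⟨j, k, by rw [hsum]; simp⟩
  · -- y = 1
    have e1 := R.s_apply j (R.a i)
    rw [hy, Int.cast_one, one_smul] at e1
    have hyk : R.c k (R.a i) = 1 := by
      have := R.c_w (R.s_mem i) (i := j) (j := k) (e := -1) (by norm_num)
        (by rw [neg_one_smul, ← hk, s_apply]) (R.a i)
      rw [s_self, c_neg, hy] at this
      push_cast at this; linarith
    have e2 := R.s_apply k (R.a i)
    rw [hyk, one_smul] at e2
    rcases R.perm (R.s_mem j) i with ⟨l, hl⟩ | ⟨l, hl⟩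
    · exact ⟨j, l, by rw [← hl, e1]; abel⟩
    rcases R.perm (R.s_mem k) i with ⟨m, hm⟩ | ⟨m, hm⟩
    · exact ⟨k, m, by rw [← hm, e2]; abel⟩
    rw [hl] at e1
    rw [hm] at e2
    have e3 : R.a l + R.a m = ((x:ℚ) - 2) • R.a i := by
      rw [sub_smul, ← hsum, two_smul, ← neg_inj, neg_add, e1, ← sub_eq_add_neg, sub_eq_add_neg, e2]
      abel
    rcases hx23 with rfl | rfl
    · have := congrArg R.φ e3
      have h1 := R.hφ l
      have h2 := R.hφ m
      rw [map_add] at this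
      norm_num at this
      linarith
    · refine ⟨l, m, ?_⟩
      rw [e3]; norm_num

lemma phi_wf : WellFounded (fun i j : ι => R.φ (R.a i) < R.φ (R.a j)) := by
  have : IsTrans ι (fun i j : ι => R.φ (R.a i) < R.φ (R.a j)) := ⟨fun _ _ _ => lt_trans⟩
  have : Std.Irrefl (fun i j : ι => R.φ (R.a i) < R.φ (R.a j)) := ⟨fun _ => lt_irrefl _⟩
  exact Finite.wellFounded_of_trans_of_irrefl _

/-- induction principle for positive cones -/
lemma pos_induction {p : ι → Prop} (hs : ∀ i, R.Simple i → p i)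
    (hd : ∀ i j k, R.a i = R.a j + R.a k → p j → p k → p i) (i : ι) : p i := by
  refine R.phi_wf.induction (C := p) i ?_
  intro i ih
  by_cases h : R.Simple i
  · exact hs i h
  · obtain ⟨j, k, hjk⟩ := R.decomp h
    have h1 := R.hφ j
    have h2 := R.hφ k
    have h3 : R.φ (R.a i) = R.φ (R.a j) + R.φ (R.a k) := by rw [hjk, map_add]
    exact hd i j k hjk (ih j (by linarith)) (ih k (by linarith))

lemma simple_nonneg {v : E} (h : ∀ i, R.Simple i → 0 ≤ R.B v (R.a i)) (i : ι) :
    0 ≤ R.B v (R.a i) := by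
  refine R.pos_induction (p := fun i => 0 ≤ R.B v (R.a i)) h ?_ i
  intro i j k hi hj hk
  rw [hi, map_add]; linarith

/-- conjugation of reflections -/
lemma s_conj {w : E ≃ₗ[ℚ] E} (hw : w ∈ R.W) {i j : ι} {t : ℚ} (h : w (R.a i) = t • R.a j) :
    w * R.s i * w⁻¹ = R.s j := by
  have ht : t ≠ 0 := by
    rintro rfl
    rw [zero_smul] at h
    exact R.a_ne i ((LinearEquiv.map_eq_zero_iff w).1 h)
  ext v
  simp only [LinearEquiv.mul_apply]
  rw [s_apply, s_apply, map_sub, map_smul]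
  have hv : w (w⁻¹ v) = v := by rw [← LinearEquiv.mul_apply, mul_inv_cancel]; rfl
  have e1 : R.B (w⁻¹ v) (R.a i) = t * R.B v (R.a j) := by
    rw [← R.isom hw, hv, h, map_smul, smul_eq_mul]
  have e2 : R.B (R.a i) (R.a i) = t * t * R.B (R.a j) (R.a j) := by
    rw [← R.isom hw, h]; simp only [map_smul, LinearMap.smul_apply, smul_eq_mul]; ring
  rw [hv, h, smul_smul, c_eq, c_eq, e1, e2]
  congr 2
  have := R.hne j
  field_simp

lemma s_eq_of_parallel {i j : ι} {t : ℚ} (h : R.a i = t • R.a j) : R.s i = R.s j := by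
  have := R.s_conj (w := 1) (one_mem _) (i := i) (j := j) (t := t) (by simpa using h)
  simpa using this

/-- product of simple reflections -/
def prd (l : List ι) : E ≃ₗ[ℚ] E := (l.map R.s).prod

def SL (n : ℕ) (w : E ≃ₗ[ℚ] E) : Prop := ∃ l : List ι, l.length = n ∧ (∀ i ∈ l, R.Simple i) ∧ R.prd l = w

lemma SL_mul {m n : ℕ} {u w : E ≃ₗ[ℚ] E} (h : R.SL m u) (h' : R.SL n w) : R.SL (m + n) (u * w) := by
  obtain ⟨l, h1, h2, h3⟩ := h
  obtain ⟨l', h1', h2', h3'⟩ := h'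
  refine ⟨l ++ l', by simp [h1, h1'], ?_, ?_⟩
  · intro i hi
    rcases List.mem_append.1 hi with h | h
    · exact h2 i h
    · exact h2' i h
  · rw [← h3, ← h3']; simp [prd]

lemma SL_s {i : ι} (h : R.Simple i) : R.SL 1 (R.s i) := ⟨[i], rfl, by simpa using h, by simp [prd]⟩

lemma prd_mem (l : List ι) : R.prd l ∈ R.W := by
  apply Subgroup.list_prod_mem
  intro x hx
  obtain ⟨i, _, rfl⟩ := List.mem_map.1 hx
  exact R.s_mem i

lemma s_SL (i : ι) : ∃ n, R.SL n (R.s i) := by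
  refine R.phi_wf.induction (C := fun i => ∃ n, R.SL n (R.s i)) i ?_
  intro i ih
  by_cases hs : R.Simple i
  · exact ⟨1, R.SL_s hs⟩
  have : ∃ k, R.Simple k ∧ 0 < R.B (R.a i) (R.a k) := by
    by_contra hcon
    push Not at hcon
    have := R.simple_nonneg (v := - R.a i) (fun k hk => by
      have := hcon k hk
      rw [map_neg, LinearMap.neg_apply]; linarith) i
    rw [map_neg, LinearMap.neg_apply] at this
    have := R.norm_pos i
    linarith
  obtain ⟨k, hk, hpos⟩ := this
  rcases R.perm (R.s_mem k) i with ⟨j, hj⟩ | hneg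
  · have hlt : R.φ (R.a j) < R.φ (R.a i) := by
      rw [← hj, s_apply, map_sub, map_smul, smul_eq_mul]
      have := mul_pos ((R.c_pos_iff k _).2 hpos) (R.hφ k)
      linarith
    obtain ⟨n, hn⟩ := ih j hlt
    have hc := R.s_conj (R.s_mem k) (i := i) (j := j) (t := 1) (by rw [hj, one_smul])
    refine ⟨1 + n + 1, ?_⟩
    have : R.s i = R.s k * R.s j * R.s k := by
      rw [← hc, s_inv]
      calc R.s i = (R.s k * R.s k) * R.s i * (R.s k * R.s k) := by rw [s_mul_s]; simp
        _ = _ := by group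
    rw [this]
    exact R.SL_mul (R.SL_mul (R.SL_s hk) hn) (R.SL_s hk)
  · obtain ⟨t, ht⟩ := hk i hneg
    rw [R.s_eq_of_parallel ht]
    exact ⟨1, R.SL_s hk⟩

lemma W_SL {w : E ≃ₗ[ℚ] E} (hw : w ∈ R.W) : ∃ n, R.SL n w := by
  refine R.W_induction (p := fun w => ∃ n, R.SL n w) ⟨0, [], rfl, by simp, by simp [prd]⟩ ?_ hw
  rintro i w _ ⟨n, hn⟩
  obtain ⟨m, hm⟩ := R.s_SL i
  exact ⟨_, R.SL_mul hm hn⟩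

lemma exchange (l : List ι) (hl : ∀ i ∈ l, R.Simple i) (g : ι)
    (h : R.Neg (R.prd l) g) : ∃ n, n < l.length ∧ R.SL n (R.prd l * R.s g) := by
  induction l with
  | nil =>
    obtain ⟨j, hj⟩ := h
    exact (R.not_pos_neg (i := g) (j := j) (by simpa [prd] using hj)).elim
  | cons k l ih =>
    have hk : R.Simple k := hl k (by simp)
    have hl' : ∀ i ∈ l, R.Simple i := fun i hi => hl i (by simp [hi])
    have e : R.prd (k :: l) = R.s k * R.prd l := by simp [prd]
    rw [e] at h ⊢
    rcases R.perm (R.prd_mem l) g with ⟨m, hm⟩ | hneg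
    · have hn : R.Neg (R.s k) m := by
        obtain ⟨j, hj⟩ := h
        rw [LinearEquiv.mul_apply, hm] at hj
        exact ⟨j, hj⟩
      obtain ⟨t, ht⟩ := hk m hn
      have hc := R.s_conj (R.prd_mem l) (i := g) (j := k) (t := t) (by rw [hm, ht])
      refine ⟨l.length, by simp, l, rfl, hl', ?_⟩
      rw [← hc]
      have := R.s_mul_s g
      calc R.prd l = R.prd l * (R.s g * R.s g) := by rw [this, mul_one]
        _ = _ := by group
    · obtain ⟨n, hn, hS⟩ := ih hl' hneg
      refine ⟨1 + n, by simp; omega, ?_⟩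
      rw [mul_assoc]
      exact R.SL_mul (R.SL_s hk) hS

lemma eq_one_of_SL (n : ℕ) : ∀ w, R.SL n w → (∀ i, ¬ R.Neg w i) → w = 1 := by
  induction n using Nat.strong_induction_on with
  | _ n ih =>
    rintro w ⟨l, hlen, hl, rfl⟩ hw
    rcases List.eq_nil_or_concat l with rfl | ⟨l', g, rfl⟩
    · simp [prd]
    · rw [List.concat_eq_append] at *
      have e : R.prd (l' ++ [g]) = R.prd l' * R.s g := by simp [prd]
      rw [e] at hw ⊢
      have hn : R.Neg (R.prd l') g := by
        rcases R.perm (R.prd_mem l') g with ⟨m, hm⟩ | hneg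
        · exfalso
          apply hw g
          refine ⟨m, ?_⟩
          rw [LinearEquiv.mul_apply, s_self, map_neg, hm]
        · exact hneg
      obtain ⟨m, hm, hS⟩ := R.exchange l' (fun i hi => hl i (by simp [hi])) g hn
      refine ih m ?_ _ hS hw
      simp at hlen; omega

lemma eq_one {w : E ≃ₗ[ℚ] E} (hw : w ∈ R.W) (h : ∀ i, ¬ R.Neg w i) : w = 1 := by
  obtain ⟨n, hn⟩ := R.W_SL hw
  exact R.eq_one_of_SL n w hn h

lemma stab {w : E ≃ₗ[ℚ] E} (hw : w ∈ R.W) {v : E} (hv : ∀ i, 0 < R.B v (R.a i)) (h : w v = v) :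
    w = 1 := by
  apply R.eq_one hw
  rintro i ⟨j, hj⟩
  have := R.isom hw v (R.a i)
  rw [h, hj, map_neg] at this
  have h1 := hv i
  have h2 := hv j
  linarith

end RD

namespace RD
variable {E ι : Type} [AddCommGroup E] [Module ℚ E] [Fintype ι] (R : RD E ι)

def KS (s : Finset ι) (v : E) : Set (ι → ℕ) :=
  {f | (∀ i, i ∉ s → f i = 0) ∧ ∑ i, (f i) • R.a i = v}

def Ks (s : Finset ι) (v : E) : ℕ := (R.KS s v).ncard

lemma KS_fin (s : Finset ι) (v : E) : (R.KS s v).Finite := by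
  classical
  refine (Set.finite_Icc (0 : ι → ℕ) (fun i => ⌈R.φ v / R.φ (R.a i)⌉₊)).subset ?_
  rintro f ⟨_, hf⟩
  refine ⟨fun i => Nat.zero_le _, fun i => ?_⟩
  have h := congrArg R.φ hf
  rw [map_sum] at h
  have h1 : R.φ (f i • R.a i) ≤ R.φ v := by
    rw [← h]
    refine Finset.single_le_sum (f := fun i => R.φ (f i • R.a i)) ?_ (Finset.mem_univ i)
    intro j _
    have := R.hφ j
    simp only [map_nsmul]
    positivity
  rw [map_nsmul, nsmul_eq_mul] at h1
  have h2 : (f i : ℚ) ≤ R.φ v / R.φ (R.a i) := (le_div_iff₀ (R.hφ i)).2 h1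
  exact_mod_cast h2.trans (Nat.le_ceil _)

lemma kostant_eq (v : E) : kostant R.a v = R.Ks Finset.univ v := by
  unfold kostant Ks KS
  simp only [Finset.mem_univ, not_true_eq_false, false_imp_iff, implies_true, true_and]
  rfl

lemma sum_single_nsmul [DecidableEq ι] (f : ι → ℕ) (i : ι) :
    ∑ j, ((f + Pi.single i 1 : ι → ℕ) j) • R.a j = ∑ j, (f j) • R.a j + R.a i := by
  simp only [Pi.add_apply, add_smul, Finset.sum_add_distrib]
  congr 1
  rw [Finset.sum_eq_single i]
  · simp
  · intro j _ hj; simp [Pi.single_apply, hj]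
  · simp

lemma Ks_rec [DecidableEq ι] (s : Finset ι) (i : ι) (hi : i ∈ s) (v : E) :
    R.Ks s v = R.Ks (s.erase i) v + R.Ks s (v - R.a i) := by
  unfold Ks
  have hinj : Function.Injective (fun f : ι → ℕ => f + Pi.single i 1) := add_left_injective _
  rw [← Set.ncard_image_of_injective (R.KS s (v - R.a i)) hinj,
    ← Set.ncard_union_eq ?_ (R.KS_fin _ _) ((R.KS_fin _ _).image _)]
  · congr 1
    ext f
    constructor
    · rintro ⟨h1, h2⟩
      by_cases h0 : f i = 0
      · left
        refine ⟨fun j hj => ?_, h2⟩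
        by_cases hji : j = i
        · rw [hji]; exact h0
        · exact h1 j (fun h => hj (Finset.mem_erase.2 ⟨hji, h⟩))
      · right
        have hf : (f - Pi.single i 1) + Pi.single i 1 = f := by
          ext j
          by_cases hji : j = i
          · subst hji; simp; omega
          · simp [Pi.single_apply, hji]
        refine ⟨f - Pi.single i 1, ⟨fun j hj => ?_, ?_⟩, hf⟩
        · simp [h1 j hj]
        · rw [eq_sub_iff_add_eq, ← R.sum_single_nsmul, hf, h2]
    · rintro (⟨h1, h2⟩ | ⟨g, ⟨h1, h2⟩, rfl⟩)
      · exact ⟨fun j hj => h1 j (fun h => hj (Finset.mem_of_mem_erase h)), h2⟩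
      · refine ⟨fun j hj => ?_, ?_⟩
        · have : j ≠ i := fun h => hj (h ▸ hi)
          simp [h1 j hj, Pi.single_apply, this]
        · simp only
          rw [R.sum_single_nsmul, h2, sub_add_cancel]
  · rw [Set.disjoint_left]
    rintro f ⟨h1, _⟩ ⟨g, _, rfl⟩
    have := h1 i (by simp)
    simp at this

lemma Ks_empty [DecidableEq E] (v : E) : R.Ks ∅ v = if v = 0 then 1 else 0 := by
  unfold Ks
  have : R.KS ∅ v = if v = 0 then {0} else ∅ := by
    ext f
    unfold KS
    constructor
    · rintro ⟨h1, h2⟩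
      have hf : f = 0 := by ext i; exact h1 i (by simp)
      subst hf
      have : v = 0 := by rw [← h2]; simp
      simp [this]
    · intro h
      split_ifs at h with h0
      · have hf : f = 0 := h
        subst hf
        exact ⟨fun _ _ => rfl, by rw [h0]; simp⟩
      · exact h.elim
  rw [this]
  split_ifs <;> simp

abbrev A (E : Type) [AddCommGroup E] [Module ℚ E] := AddMonoidAlgebra ℚ E

def ex (v : E) : A E := AddMonoidAlgebra.single v (1:ℚ)

lemma ex_mul (u v : E) : ex u * ex v = ex (u + v) := by
  simp [ex, AddMonoidAlgebra.single_mul_single]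

lemma ex_zero : ex (0 : E) = 1 := rfl

lemma ex_coeff [DecidableEq E] (u v : E) : (ex u).coeff v = if u = v then 1 else 0 := by
  simp [ex, Finsupp.single_apply]

lemma coeff_ex_mul (u v : E) (x : A E) : (ex u * x).coeff v = x.coeff (v - u) := by
  rw [ex, AddMonoidAlgebra.coeff_single_mul_apply, one_mul]
  congr 1; abel

def f (i : ι) : A E := 1 - ex (- R.a i)

lemma coeff_f_mul (i : ι) (x : A E) (v : E) :
    (R.f i * x).coeff v = x.coeff v - x.coeff (v + R.a i) := by
  rw [f, sub_mul, one_mul, AddMonoidAlgebra.coeff_sub, Finsupp.sub_apply, coeff_ex_mul, sub_neg_eq_add]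

lemma f_ne (i : ι) : R.f i ≠ 0 := by
  classical
  intro h
  have := congrArg (fun x : A E => x.coeff 0) h
  simp only [f, ← ex_zero, AddMonoidAlgebra.coeff_sub, Finsupp.sub_apply, ex_coeff] at this
  simp [R.a_ne i] at this

lemma kost_prod {κ : Type} [Fintype κ] (x : κ → E) (cf : κ → ℚ) (F : A E)
    (hF : ∀ μ, F.coeff μ = ∑ w, cf w * (kostant R.a (x w - μ) : ℚ)) :
    (∏ i, R.f i) * F = ∑ w, cf w • ex (x w) := by
  classical
  have key : ∀ T : Finset ι, ∀ μ, ((∏ i ∈ T, R.f i) * F).coeff μ =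
      ∑ w, cf w * (R.Ks Tᶜ (x w - μ) : ℚ) := by
    intro T
    induction T using Finset.induction_on with
    | empty => intro μ; simp [hF, kostant_eq]
    | insert i T hi ih =>
      intro μ
      rw [Finset.prod_insert hi, mul_assoc, coeff_f_mul, ih, ih, ← Finset.sum_sub_distrib]
      apply Finset.sum_congr rfl
      intro w _
      have := R.Ks_rec Tᶜ i (by simpa using hi) (x w - μ)
      rw [this, Finset.compl_insert, sub_sub]
      push_cast; ring
  ext μ
  rw [key, AddMonoidAlgebra.coeff_sum, Finsupp.finsetSum_apply]
  apply Finset.sum_congr rfl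
  intro w _
  rw [Finset.compl_univ, Ks_empty, AddMonoidAlgebra.coeff_smul, Finsupp.smul_apply, ex_coeff, smul_eq_mul]
  simp [sub_eq_zero]

def D : A E := ex R.ρ * ∏ i, R.f i

lemma ex_ne (v : E) : ex v ≠ 0 := by
  classical
  intro h
  have := congrArg (fun x : A E => x.coeff v) h
  simp [ex_coeff] at this

lemma D_ne : R.D ≠ 0 := mul_ne_zero (ex_ne _) (Finset.prod_ne_zero_iff.2 fun i _ => R.f_ne i)

/-- action -/
def act (w : E ≃ₗ[ℚ] E) : A E ≃ₐ[ℚ] A E := AddMonoidAlgebra.domCongr ℚ ℚ w.toAddEquiv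

lemma act_ex (w : E ≃ₗ[ℚ] E) (v : E) : act w (ex v) = ex (w v) := by
  simp [act, ex]

lemma act_coeff (w : E ≃ₗ[ℚ] E) (x : A E) (v : E) : (act w x).coeff (w v) = x.coeff v := by
  simp [act]

def Red : Prop := ∀ i j (t : ℚ), R.a j = t • R.a i → i = j

lemma exists_perm_s (i : ι) : ∃ σ : Equiv.Perm ι, (∀ j, R.s i (R.a j) = R.sg (R.s i) j • R.a (σ j)) ∧
    σ i = i := by
  obtain ⟨σ, hσ⟩ := R.exists_perm (R.s_mem i)
  refine ⟨σ, hσ, ?_⟩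
  have := hσ i
  rw [s_self, R.sg_neg (R.neg_s_self i), neg_one_smul, neg_inj] at this
  exact (R.inj this).symm

lemma rho_simple (hR : R.Red) {i : ι} (hi : R.Simple i) : R.c i R.ρ = 1 := by
  classical
  obtain ⟨σ, hσ, hσi⟩ := R.exists_perm_s i
  have h := R.rho_sub hσ
  have : (Finset.univ.filter fun j => R.Neg (R.s i) j) = {i} := by
    ext j
    simp only [Finset.mem_filter, Finset.mem_univ, true_and, Finset.mem_singleton]
    constructor
    · intro hj
      obtain ⟨t, ht⟩ := hi j hj
      exact (hR i j t ht).symm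
    · rintro rfl; exact R.neg_s_self j
  rw [this, Finset.sum_singleton, hσi, s_apply, sub_sub_cancel] at h
  have h2 : (R.c i R.ρ - 1) • R.a i = 0 := by rw [sub_smul, h, one_smul, sub_self]
  rcases smul_eq_zero.1 h2 with h3 | h3
  · linarith
  · exact absurd h3 (R.a_ne i)

open Classical in
lemma prod_neg_one (hR : R.Red) (i : ι) :
    ∏ j with R.Neg (R.s i) j, (-1 : A E) = -1 := by
  obtain ⟨σ, hσ, hσi⟩ := R.exists_perm_s i
  rw [← Finset.mul_prod_erase _ _ (show i ∈ Finset.univ.filter fun j => R.Neg (R.s i) j by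
    simp [R.neg_s_self i])]
  rw [show ∏ j ∈ (Finset.univ.filter fun j => R.Neg (R.s i) j).erase i, (-1 : A E) = 1 from ?_, mul_one]
  have hN : ∀ j, R.Neg (R.s i) j → R.s i (R.a j) = - R.a (σ j) := by
    intro j hj
    rw [hσ, R.sg_neg hj, neg_one_smul]
  have hN2 : ∀ j, R.Neg (R.s i) j → R.s i (R.a (σ j)) = - R.a j := by
    intro j hj
    rw [← neg_inj, ← map_neg, ← hN j hj, s_s, neg_neg]
  refine Finset.prod_involution (fun j _ => σ j) ?_ ?_ ?_ ?_
  · intros; norm_num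
  · intro j hj _ hfix
    simp only [Finset.mem_erase, Finset.mem_filter, Finset.mem_univ, true_and] at hj
    have h1 := hN j hj.2
    rw [hfix, s_apply] at h1
    apply hj.1
    refine (hR i j (R.c i (R.a j) / 2) ?_).symm
    have h2 : (2:ℚ) • R.a j = R.c i (R.a j) • R.a i := by
      rw [two_smul, ← sub_eq_zero]; rw [← sub_eq_zero] at h1; rw [← h1]; abel
    rw [div_eq_inv_mul, mul_smul, ← h2, smul_smul]; norm_num
  · intro j hj
    simp only [Finset.mem_erase, Finset.mem_filter, Finset.mem_univ, true_and] at hj ⊢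
    refine ⟨fun h => hj.1 (σ.injective (h.trans hσi.symm)), ⟨j, hN2 j hj.2⟩⟩
  · intro j hj
    simp only [Finset.mem_erase, Finset.mem_filter, Finset.mem_univ, true_and] at hj
    apply R.inj
    have h1 := hN2 j hj.2
    rw [hN (σ j) ⟨j, h1⟩, neg_inj] at h1
    exact h1

lemma ex_sum {κ : Type} (t : Finset κ) (g : κ → E) : ex (∑ k ∈ t, g k) = ∏ k ∈ t, ex (g k) := by
  classical
  induction t using Finset.induction_on with
  | empty => simp [ex_zero]
  | insert i t hi ih => rw [Finset.sum_insert hi, Finset.prod_insert hi, ← ih, ex_mul]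

lemma act_D (hR : R.Red) (i : ι) : act (R.s i) R.D = - R.D := by
  classical
  obtain ⟨σ, hσ, hσi⟩ := R.exists_perm_s i
  have h1 : ∀ j, act (R.s i) (R.f j) =
      (if R.Neg (R.s i) j then - ex (R.a (σ j)) else 1) * R.f (σ j) := by
    intro j
    have : act (R.s i) (R.f j) = 1 - ex (- R.s i (R.a j)) := by
      rw [f, map_sub, map_one, act_ex, map_neg]
    rw [this, hσ j, f]
    split_ifs with h
    · rw [R.sg_neg h, neg_one_smul, neg_neg, mul_sub, neg_mul, neg_mul, ex_mul, add_neg_cancel, ex_zero]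
      ring
    · rw [R.sg_pos h, one_smul, one_mul]
  have h2 : ∏ j, (if R.Neg (R.s i) j then - ex (R.a (σ j)) else 1) = - ex (R.ρ - R.s i R.ρ) := by
    rw [← Finset.prod_filter, R.rho_sub hσ, ex_sum]
    rw [show (fun j => - ex (R.a (σ j))) = fun j => (-1 : A E) * ex (R.a (σ j)) by
      ext1 j; rw [neg_one_mul]]
    rw [Finset.prod_mul_distrib, R.prod_neg_one hR, neg_one_mul]
  rw [D, map_mul, map_prod, act_ex]
  simp only [h1]
  rw [Finset.prod_mul_distrib, h2, Equiv.prod_comp σ R.f, ← mul_assoc, mul_neg, ex_mul,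
    add_sub_cancel, neg_mul]

lemma D_coeff_s (hR : R.Red) (i : ι) (v : E) : R.D.coeff (R.s i v) = - R.D.coeff v := by
  have := act_coeff (R.s i) R.D v
  rw [R.act_D hR] at this
  rw [← this, AddMonoidAlgebra.coeff_neg, Finsupp.neg_apply, neg_neg]

lemma D_coeff_w (hR : R.Red) {w : E ≃ₗ[ℚ] E} (hw : w ∈ R.W) {v : E} (hv : R.D.coeff v ≠ 0) :
    R.D.coeff (w v) ≠ 0 := by
  refine R.W_induction (p := fun w => R.D.coeff (w v) ≠ 0) hv ?_ hw
  intro i w _ h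
  rw [LinearEquiv.mul_apply, R.D_coeff_s hR]
  simpa using h

lemma D_supp {v : E} (hv : R.D.coeff v ≠ 0) : ∃ n : ι → ℕ, v = R.ρ - ∑ i, n i • R.a i := by
  classical
  have key : ∀ T : Finset ι, ∀ v, (∏ i ∈ T, R.f i).coeff v ≠ 0 → ∃ n : ι → ℕ, v = - ∑ i, n i • R.a i := by
    intro T
    induction T using Finset.induction_on with
    | empty =>
      intro v hv
      rw [Finset.prod_empty, ← ex_zero, ex_coeff] at hv
      refine ⟨0, ?_⟩
      by_contra h
      apply hv
      rw [if_neg]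
      intro h'; apply h; rw [← h']; simp
    | insert i T hi ih =>
      intro v hv
      rw [Finset.prod_insert hi, coeff_f_mul] at hv
      by_cases h1 : (∏ i ∈ T, R.f i).coeff v = 0
      · have h2 : (∏ i ∈ T, R.f i).coeff (v + R.a i) ≠ 0 := by
          intro h; apply hv; rw [h1, h, sub_zero]
        obtain ⟨n, hn⟩ := ih _ h2
        refine ⟨n + Pi.single i 1, ?_⟩
        rw [R.sum_single_nsmul, neg_add, ← hn]; abel
      · exact ih _ h1
  rw [D, coeff_ex_mul] at hv
  obtain ⟨n, hn⟩ := key _ _ hv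
  exact ⟨n, by rw [sub_eq_add_neg, ← hn]; abel⟩

lemma exists_max [Finite R.W] (g : R.W → ℚ) : ∃ w, ∀ u, g u ≤ g w := Finite.exists_max g

lemma D_norm [Finite R.W] (hR : R.Red) {v : E} (hv : R.D.coeff v ≠ 0) : R.B v v = R.B R.ρ R.ρ := by
  obtain ⟨⟨w, hw⟩, hmax⟩ := R.exists_max (fun w : R.W => R.B ((w : E ≃ₗ[ℚ] E) v) R.ρ)
  have hwv := R.D_coeff_w hR hw hv
  have h1 : ∀ i, 0 < R.c i (w v) := by
    intro i
    by_contra hcon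
    have hne : R.c i (w v) ≠ 0 := by
      intro h0
      have := R.D_coeff_s hR i (w v)
      rw [s_apply, h0, zero_smul, sub_zero] at this
      apply hwv; linarith
    have hlt : R.c i (w v) < 0 := lt_of_le_of_ne (not_lt.1 hcon) hne
    have := hmax ⟨R.s i * w, R.W.mul_mem (R.s_mem i) hw⟩
    simp only [LinearEquiv.mul_apply] at this
    rw [s_apply, map_sub, map_smul, LinearMap.sub_apply, LinearMap.smul_apply, smul_eq_mul,
      R.hsym (R.a i)] at this
    have := mul_neg_of_neg_of_pos hlt (R.rho_pos i)
    linarith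
  obtain ⟨n, hn⟩ := R.D_supp hwv
  have h2 : ∀ i, 0 ≤ R.B (w v - R.ρ) (R.a i) := by
    apply R.simple_nonneg
    intro i hi
    rw [← c_nonneg_iff, c_sub, R.rho_simple hR hi]
    have hz : ∃ z : ℤ, R.c i (w v) = z := by
      choose z hz using R.hint i
      refine ⟨1 - ∑ j, n j * z j, ?_⟩
      rw [hn, c_sub, c_sum, R.rho_simple hR hi]
      push_cast
      congr 1
      apply Finset.sum_congr rfl
      intro j _
      rw [← Nat.cast_smul_eq_nsmul ℚ, c_smul, c, hz]
    obtain ⟨z, hz⟩ := hz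
    have := h1 i
    rw [hz] at this ⊢
    have : 0 < z := by exact_mod_cast this
    have : (1:ℚ) ≤ z := by exact_mod_cast this
    linarith
  have h3 : w v - R.ρ = 0 := by
    apply R.norm_eq_zero
    have e : R.B (w v - R.ρ) (w v - R.ρ) = - ∑ i, n i * R.B (w v - R.ρ) (R.a i) := by
      have : w v - R.ρ = - ∑ i, n i • R.a i := by rw [hn]; abel
      conv_lhs => rw [this, map_neg, ← this]
      rw [map_sum]; simp only [map_nsmul, nsmul_eq_mul]
    rw [e]
    have : 0 ≤ ∑ i, (n i : ℚ) * R.B (w v - R.ρ) (R.a i) :=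
      Finset.sum_nonneg fun i _ => mul_nonneg (Nat.cast_nonneg _) (h2 i)
    linarith
  rw [← R.isom hw v v, sub_eq_zero.1 h3]

end RD

namespace RD
variable {E ι : Type} [AddCommGroup E] [Module ℚ E] [Fintype ι] (R : RD E ι)

def lin {M : Type} [AddCommGroup M] [Module ℚ M] (g : E → M) : A E →ₗ[ℚ] M :=
  (Finsupp.linearCombination ℚ g) ∘ₗ (AddMonoidAlgebra.coeffLinearEquiv ℚ).toLinearMap

lemma lin_ex {M : Type} [AddCommGroup M] [Module ℚ M] (g : E → M) (v : E) : lin g (ex v) = g v := by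
  simp [lin, ex, AddMonoidAlgebra.coeffLinearEquiv]

lemma A_induction {p : A E → Prop} (x : A E) (h0 : p 0) (hadd : ∀ x y, p x → p y → p (x + y))
    (hsmul : ∀ (r : ℚ) v, p (r • ex v)) : p x := by
  refine AddMonoidAlgebra.induction_linear x h0 hadd ?_
  intro m r
  have := hsmul r m
  simpa [ex, AddMonoidAlgebra.smul_single] using this

lemma lin_eq {M : Type} [AddCommGroup M] [Module ℚ M] {g h : A E →ₗ[ℚ] M}
    (H : ∀ v, g (ex v) = h (ex v)) (x : A E) : g x = h x := by
  refine A_induction (p := fun x => g x = h x) x (by simp) (fun x y hx hy => by rw [map_add, map_add, hx, hy]) ?_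
  intro r v
  rw [map_smul, map_smul, H]

def Lap : A E →ₗ[ℚ] A E := lin fun v => R.B v v • ex v
def Dx (y : E) : A E →ₗ[ℚ] A E := lin fun v => R.B v y • ex v
def Γ : A E →ₗ[ℚ] A E →ₗ[ℚ] A E := lin fun v => lin fun u => R.B v u • ex (v + u)

lemma diag_coeff (g : E → ℚ) (x : A E) (v : E) :
    (lin (fun v => g v • ex v) x).coeff v = g v * x.coeff v := by
  classical
  refine A_induction (p := fun x => (lin (fun v => g v • ex v) x).coeff v = g v * x.coeff v) x (by simp) (fun x y hx hy => ?_) ?_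
  · simp only [map_add, AddMonoidAlgebra.coeff_add, Finsupp.add_apply, hx, hy]; ring
  · intro r u
    simp only [map_smul, lin_ex, AddMonoidAlgebra.coeff_smul, Finsupp.smul_apply, ex_coeff, smul_eq_mul]
    split_ifs with h
    · subst h; ring
    · ring

lemma Lap_coeff (x : A E) (v : E) : (R.Lap x).coeff v = R.B v v * x.coeff v := diag_coeff _ x v
lemma Dx_coeff (y : E) (x : A E) (v : E) : (R.Dx y x).coeff v = R.B v y * x.coeff v := 
  diag_coeff (fun v => R.B v y) x v

lemma Lap_eq {x : A E} {t : ℚ} (h : ∀ v, x.coeff v ≠ 0 → R.B v v = t) : R.Lap x = t • x := by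
  ext v
  rw [Lap_coeff, AddMonoidAlgebra.coeff_smul, Finsupp.smul_apply, smul_eq_mul]
  by_cases h0 : x.coeff v = 0
  · rw [h0]; ring
  · rw [h v h0]

lemma Γ_ex (u v : E) : R.Γ (ex u) (ex v) = R.B u v • ex (u + v) := by
  rw [Γ, lin_ex, lin_ex]

lemma Lap_ex (u : E) : R.Lap (ex u) = R.B u u • ex u := lin_ex _ _
lemma Dx_ex (y u : E) : R.Dx y (ex u) = R.B u y • ex u := lin_ex _ _

lemma Lap_mul (x y : A E) : R.Lap (x * y) = R.Lap x * y + x * R.Lap y + (2:ℚ) • R.Γ x y := by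
  have h : ∀ u y, R.Lap (ex u * y) = R.Lap (ex u) * y + ex u * R.Lap y + (2:ℚ) • R.Γ (ex u) y := by
    intro u y
    refine lin_eq (g := R.Lap ∘ₗ LinearMap.mulLeft ℚ (ex u))
      (h := LinearMap.mulLeft ℚ (R.Lap (ex u)) + LinearMap.mulLeft ℚ (ex u) ∘ₗ R.Lap + (2:ℚ) • R.Γ (ex u))
      ?_ y
    intro v
    simp only [LinearMap.comp_apply, LinearMap.mulLeft_apply, LinearMap.add_apply, LinearMap.smul_apply,
      Lap_ex, Γ_ex, ex_mul, smul_mul_assoc, mul_smul_comm, smul_smul, ← add_smul]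
    congr 1
    simp only [map_add, LinearMap.add_apply]
    rw [R.hsym v u]; ring
  refine lin_eq (g := R.Lap ∘ₗ LinearMap.mulRight ℚ y)
      (h := LinearMap.mulRight ℚ y ∘ₗ R.Lap + LinearMap.mulRight ℚ (R.Lap y) + (2:ℚ) • R.Γ.flip y)
      ?_ x
  intro u
  exact h u y

lemma Γ_ex_left (u : E) (z : A E) : R.Γ (ex u) z = ex u * R.Dx u z := by
  refine lin_eq (g := R.Γ (ex u)) (h := LinearMap.mulLeft ℚ (ex u) ∘ₗ R.Dx u) ?_ z
  intro v
  simp only [LinearMap.comp_apply, LinearMap.mulLeft_apply, Γ_ex, Dx_ex, mul_smul_comm, ex_mul]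
  rw [R.hsym]

lemma Dx_add (u v : E) (z : A E) : R.Dx (u + v) z = R.Dx u z + R.Dx v z := by
  ext w
  simp only [Dx_coeff, AddMonoidAlgebra.coeff_add, Finsupp.add_apply, map_add]; ring

lemma Γ_mul (x y z : A E) : R.Γ (x * y) z = R.Γ x z * y + x * R.Γ y z := by
  have h : ∀ u y, R.Γ (ex u * y) z = R.Γ (ex u) z * y + ex u * R.Γ y z := by
    intro u y
    refine lin_eq (g := R.Γ.flip z ∘ₗ LinearMap.mulLeft ℚ (ex u))
      (h := LinearMap.mulLeft ℚ (R.Γ (ex u) z) + LinearMap.mulLeft ℚ (ex u) ∘ₗ R.Γ.flip z)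
      ?_ y
    intro v
    simp only [LinearMap.comp_apply, LinearMap.mulLeft_apply, LinearMap.add_apply, LinearMap.flip_apply,
      Γ_ex_left, ex_mul, Dx_add]
    rw [← ex_mul]; ring
  refine lin_eq (g := R.Γ.flip z ∘ₗ LinearMap.mulRight ℚ y)
      (h := LinearMap.mulRight ℚ y ∘ₗ R.Γ.flip z + LinearMap.mulRight ℚ (R.Γ y z))
      ?_ x
  intro u
  exact h u y

lemma Γ_f (i : ι) (z : A E) : R.Γ (R.f i) z = ex (- R.a i) * R.Dx (R.a i) z := by
  have h0 : R.Dx 0 z = 0 := by ext w; simp [Dx_coeff]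
  have h1 : R.Dx (- R.a i) z = - R.Dx (R.a i) z := by
    have := R.Dx_add (R.a i) (- R.a i) z
    rw [add_neg_cancel, h0] at this
    exact (neg_eq_of_add_eq_zero_right this.symm).symm
  rw [f, ← ex_zero, map_sub, LinearMap.sub_apply, Γ_ex_left, Γ_ex_left, h0, h1]
  ring

lemma Γ_D (z : A E) (G : ι → A E) (hG : ∀ i, R.Dx (R.a i) z = R.f i * G i) :
    R.Γ R.D z = R.D * (R.Dx R.ρ z + ∑ i, ex (- R.a i) * G i) := by
  classical
  have h0 : R.Dx 0 z = 0 := by ext w; simp [Dx_coeff]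
  have key : ∀ T : Finset ι, R.Γ (∏ i ∈ T, R.f i) z =
      (∏ i ∈ T, R.f i) * ∑ i ∈ T, ex (- R.a i) * G i := by
    intro T
    induction T using Finset.induction_on with
    | empty => rw [Finset.prod_empty, ← ex_zero, Γ_ex_left, h0]; simp
    | insert i T hi ih =>
      rw [Finset.prod_insert hi, Finset.sum_insert hi, Γ_mul, ih, Γ_f, hG]; ring
  rw [D, Γ_mul, key, Γ_ex_left]; ring

/-- a rank one string -/
lemma string (i : ι) (μ : E) (k : ℕ) (hk : R.c i μ = k) :
    ∃ G : A E, (∀ v, 0 ≤ G.coeff v) ∧ R.f i * G = R.B μ (R.a i) • (ex μ - ex (R.s i μ)) ∧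
      (0 < k → 0 < G.coeff μ) := by
  classical
  have hB : 0 ≤ R.B μ (R.a i) := by rw [← c_nonneg_iff, hk]; positivity
  refine ⟨R.B μ (R.a i) • ∑ t ∈ Finset.range k, ex (μ - (t:ℚ) • R.a i), ?_, ?_, ?_⟩
  · intro v
    rw [AddMonoidAlgebra.coeff_smul, Finsupp.smul_apply, AddMonoidAlgebra.coeff_sum, Finsupp.finsetSum_apply,
      smul_eq_mul]
    refine mul_nonneg hB (Finset.sum_nonneg fun t _ => ?_)
    rw [ex_coeff]; split_ifs <;> norm_num
  · rw [mul_smul_comm, Finset.mul_sum]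
    congr 1
    have : ∀ t : ℕ, R.f i * ex (μ - (t:ℚ) • R.a i) =
        ex (μ - (t:ℚ) • R.a i) - ex (μ - ((t+1 : ℕ):ℚ) • R.a i) := by
      intro t
      rw [f, sub_mul, one_mul, ex_mul]
      congr 2
      push_cast
      rw [add_smul, one_smul]; abel
    simp only [this]
    rw [Finset.sum_range_sub' (fun t : ℕ => ex (μ - (t:ℚ) • R.a i)), s_apply, hk]
    simp
  · intro hk0
    have hB' : 0 < R.B μ (R.a i) := by rw [← c_pos_iff, hk]; exact_mod_cast hk0
    rw [AddMonoidAlgebra.coeff_smul, Finsupp.smul_apply, AddMonoidAlgebra.coeff_sum, Finsupp.finsetSum_apply,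
      smul_eq_mul]
    refine mul_pos hB' (Finset.sum_pos' (fun t _ => ?_) ⟨0, by simpa using hk0, ?_⟩)
    · rw [ex_coeff]; split_ifs <;> norm_num
    · simp [ex_coeff]

lemma string' (i : ι) (μ : E) (z : ℤ) (hz : R.c i μ = z) :
    ∃ G : A E, (∀ v, 0 ≤ G.coeff v) ∧ R.f i * G = R.B μ (R.a i) • (ex μ - ex (R.s i μ)) ∧
      (0 < R.c i μ → 0 < G.coeff μ) := by
  rcases Int.le_total 0 z with h | h
  · lift z to ℕ using h
    obtain ⟨G, h1, h2, h3⟩ := R.string i μ z (by rw [hz]; simp)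
    refine ⟨G, h1, h2, fun h => h3 ?_⟩
    rw [hz] at h; exact_mod_cast h
  · obtain ⟨k, rfl⟩ : ∃ k : ℕ, z = -k := ⟨z.natAbs, by omega⟩
    have e : R.B (R.s i μ) (R.a i) = - R.B μ (R.a i) := by
      have := R.s_isom i μ (R.a i)
      rw [s_self, map_neg] at this; linarith
    obtain ⟨G, h1, h2, h3⟩ := R.string i (R.s i μ) k (by
      rw [c_eq, e]
      rw [c_eq] at hz
      push_cast at hz
      rw [← neg_eq_iff_eq_neg] at hz
      rw [← hz]; ring)
    refine ⟨G, h1, ?_, ?_⟩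
    · rw [h2, e, s_s, neg_smul, ← smul_neg, neg_sub]
    · intro h; rw [hz] at h; push_cast at h
      have : (0:ℚ) ≤ k := by positivity
      linarith

/-- Freudenthal-type argument. -/
lemma minuscule_aux [Finite R.W] (hR : R.Red) (O : Finset E) (lam : E)
    (hO : ∀ μ, μ ∈ O ↔ ∃ w ∈ R.W, w lam = μ)
    (hint : ∀ μ ∈ O, ∀ i, ∃ z : ℤ, R.c i μ = z)
    (J : A E) (hJ : ∀ v, J.coeff v ≠ 0 → R.B v v = R.B (lam + R.ρ) (lam + R.ρ))
    (hDJ : R.D * ∑ μ ∈ O, ex μ = J) (μ : E) (hμ : μ ∈ O) (i : ι) : R.c i μ ≤ 1 := by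
  classical
  set F : A E := ∑ μ ∈ O, ex μ with hFdef
  have hFc : ∀ v, F.coeff v = if v ∈ O then 1 else 0 := by
    intro v
    rw [hFdef, AddMonoidAlgebra.coeff_sum, Finsupp.finsetSum_apply]
    simp [ex_coeff]
  have hnorm : ∀ μ ∈ O, R.B μ μ = R.B lam lam := by
    intro μ hμ
    obtain ⟨w, hw, rfl⟩ := (hO μ).1 hμ
    exact R.isom hw _ _
  have hs : ∀ i, ∀ μ ∈ O, R.s i μ ∈ O := by
    intro i μ hμ
    obtain ⟨w, hw, rfl⟩ := (hO μ).1 hμ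
    exact (hO _).2 ⟨R.s i * w, R.W.mul_mem (R.s_mem i) hw, rfl⟩
  have hLF : R.Lap F = R.B lam lam • F := by
    apply R.Lap_eq
    intro v hv
    rw [hFc] at hv
    by_cases h : v ∈ O
    · exact hnorm v h
    · simp [h] at hv
  have hLD : R.Lap R.D = R.B R.ρ R.ρ • R.D := R.Lap_eq fun v hv => R.D_norm hR hv
  have hLJ : R.Lap J = R.B (lam + R.ρ) (lam + R.ρ) • J := R.Lap_eq hJ
  have hG : ∀ i, ∃ G : A E, R.Dx (R.a i) F = R.f i * G ∧ (∀ v, 0 ≤ G.coeff v) ∧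
      ∀ μ ∈ O, 0 < R.c i μ → 0 < G.coeff μ := by
    intro i
    have : ∀ μ : O, ∃ G : A E, (∀ v, 0 ≤ G.coeff v) ∧ R.f i * G = R.B μ (R.a i) • (ex μ.1 - ex (R.s i μ)) ∧
      (0 < R.c i μ → 0 < G.coeff μ) := by
      intro μ
      obtain ⟨z, hz⟩ := hint μ μ.2 i
      exact R.string' i μ z hz
    choose g h1 h2 h3 using this
    refine ⟨(2⁻¹:ℚ) • ∑ μ, g μ, ?_, ?_, ?_⟩
    · rw [mul_smul_comm, Finset.mul_sum]
      simp only [h2]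
      rw [Finset.sum_coe_sort O (fun μ => R.B μ (R.a i) • (ex μ - ex (R.s i μ)))]
      simp only [smul_sub, Finset.sum_sub_distrib]
      have e1 : ∑ μ ∈ O, R.B μ (R.a i) • ex (R.s i μ) = - ∑ μ ∈ O, R.B μ (R.a i) • ex μ := by
        rw [← Finset.sum_neg_distrib]
        refine Finset.sum_bij' (fun μ _ => R.s i μ) (fun μ _ => R.s i μ) (fun μ h => hs i μ h)
          (fun μ h => hs i μ h) (fun μ _ => R.s_s i μ) (fun μ _ => R.s_s i μ) ?_
        intro μ _
        have := R.s_isom i μ (R.a i)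
        rw [s_self, map_neg] at this
        rw [← this, neg_smul]
      rw [e1, smul_neg, sub_neg_eq_add, ← add_smul, hFdef, map_sum]
      simp only [Dx_ex]
      norm_num
    · intro v
      rw [AddMonoidAlgebra.coeff_smul, Finsupp.smul_apply, AddMonoidAlgebra.coeff_sum, Finsupp.finsetSum_apply,
        smul_eq_mul]
      exact mul_nonneg (by norm_num) (Finset.sum_nonneg fun μ _ => h1 μ v)
    · intro μ hμ hc
      rw [AddMonoidAlgebra.coeff_smul, Finsupp.smul_apply, AddMonoidAlgebra.coeff_sum, Finsupp.finsetSum_apply,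
        smul_eq_mul]
      exact mul_pos (by norm_num) (Finset.sum_pos' (fun ν _ => h1 ν μ) ⟨⟨μ, hμ⟩, Finset.mem_univ _, h3 ⟨μ, hμ⟩ hc⟩)
  choose G hG1 hG2 hG3 using hG
  have hΓ := R.Γ_D F G hG1
  have hmul := R.Lap_mul R.D F
  rw [hDJ, hLJ, hLF, hLD, hΓ, ← hDJ] at hmul
  have key : R.D * (R.B lam R.ρ • F - (R.Dx R.ρ F + ∑ i, ex (- R.a i) * G i)) = 0 := by
    have e : R.B (lam + R.ρ) (lam + R.ρ) = R.B lam lam + R.B R.ρ R.ρ + 2 * R.B lam R.ρ := by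
      simp only [map_add, LinearMap.add_apply]; rw [R.hsym R.ρ lam]; ring
    rw [e] at hmul
    have h2 : (2:ℚ) • (R.D * (R.B lam R.ρ • F - (R.Dx R.ρ F + ∑ i, ex (- R.a i) * G i))) = 0 := by
      rw [mul_sub, smul_sub, sub_eq_zero, mul_smul_comm, smul_smul]
      rw [add_smul, add_smul, smul_mul_assoc, mul_smul_comm] at hmul
      have h3 := sub_eq_zero.2 hmul
      rw [← sub_eq_zero, ← h3]
      abel
    exact (smul_eq_zero.1 h2).resolve_left (by norm_num)
  have key2 := sub_eq_zero.1 ((mul_eq_zero.1 key).resolve_left R.D_ne)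
  by_contra hcon
  push Not at hcon
  have hnot : μ - R.a i ∉ O := by
    intro h
    have h1 := hnorm _ h
    rw [← hnorm μ hμ] at h1
    simp only [map_sub, LinearMap.sub_apply] at h1
    rw [R.hsym (R.a i) μ] at h1
    have h2 := R.c_mul i μ
    have h3 := R.norm_pos i
    nlinarith
  have h4 := congrArg (fun x : A E => x.coeff (μ - R.a i)) key2
  simp only [AddMonoidAlgebra.coeff_smul, Finsupp.smul_apply, AddMonoidAlgebra.coeff_add,
    Finsupp.add_apply, Dx_coeff, hFc, if_neg hnot, AddMonoidAlgebra.coeff_sum, Finsupp.finsetSum_apply,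
    coeff_ex_mul, smul_zero, mul_zero, zero_add] at h4
  have h5 : 0 < ∑ j, (G j).coeff (μ - R.a i - - R.a j) := by
    refine Finset.sum_pos' (fun j _ => hG2 j _) ⟨i, Finset.mem_univ _, ?_⟩
    rw [sub_neg_eq_add, sub_add_cancel]
    exact hG3 i μ hμ (by linarith)
  linarith

/-- The nonreduced case is impossible. -/
lemma red_of [Fintype R.W] (cf : R.W → ℚ) (v : E) (hv : ∀ i, 0 < R.B v (R.a i))
    (h1 : cf 1 = 1) (hs : ∀ i, cf ⟨R.s i, R.s_mem i⟩ = -1) (F : A E)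
    (hDF : R.D * F = ∑ w, cf w • ex ((w : E ≃ₗ[ℚ] E) v)) : R.Red := by
  classical
  intro i j t ht
  by_contra hij
  have hBi := hv i
  let L : A E →ₗ[ℚ] ℚ := lin fun u => if ∃ r : ℚ, u = v + r • R.a i then R.B u (R.a i) else 0
  have hline : ∀ (u : E) (q : ℚ), (∃ r : ℚ, u + q • R.a i = v + r • R.a i) ↔ ∃ r : ℚ, u = v + r • R.a i := by
    intro u q
    constructor
    · rintro ⟨r, hr⟩
      exact ⟨r - q, by rw [sub_smul, ← add_sub_assoc, ← hr]; abel⟩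
    · rintro ⟨r, hr⟩
      exact ⟨r + q, by rw [add_smul, hr]; abel⟩
  have hL : ∀ x : A E, L (R.f i * (R.f j * x)) = 0 := by
    intro x
    refine lin_eq (g := L ∘ₗ LinearMap.mulLeft ℚ (R.f i) ∘ₗ LinearMap.mulLeft ℚ (R.f j)) (h := 0) ?_ x
    intro u
    have e : R.f i * (R.f j * ex u) = ex (u + (0:ℚ) • R.a i) - ex (u + (-t) • R.a i)
        - ex (u + (-1:ℚ) • R.a i) + ex (u + (-1-t) • R.a i) := by
      rw [f, f, ht, sub_mul, sub_mul, one_mul, one_mul, mul_sub, ex_mul, ex_mul, ex_mul]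
      have a1 : u + (0:ℚ) • R.a i = u := by simp
      have a2 : -(t • R.a i) + u = u + (-t) • R.a i := by rw [neg_smul]; abel
      have a3 : -R.a i + u = u + (-1:ℚ) • R.a i := by rw [neg_one_smul]; abel
      have a4 : -R.a i + (-(t • R.a i) + u) = u + (-1-t) • R.a i := by
        rw [sub_smul, neg_one_smul]; abel
      rw [a1, a4, a2, a3]; ring
    simp only [LinearMap.comp_apply, LinearMap.mulLeft_apply, LinearMap.zero_apply]
    rw [e]
    simp only [map_add, map_sub, L, lin_ex, hline]
    split_ifs
    · simp only [map_add, map_smul, LinearMap.add_apply, LinearMap.smul_apply, smul_eq_mul]; ring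
    · ring
  have h0 : L (R.D * F) = 0 := by
    have : R.D * F = R.f i * (R.f j * (ex R.ρ * (∏ k ∈ (Finset.univ.erase i).erase j, R.f k) * F)) := by
      rw [D, ← Finset.mul_prod_erase Finset.univ R.f (Finset.mem_univ i),
        ← Finset.mul_prod_erase (Finset.univ.erase i) R.f (Finset.mem_erase.2 ⟨fun h => hij h.symm, Finset.mem_univ j⟩)]
      ring
    rw [this, hL]
  rw [hDF, map_sum] at h0
  let s' : R.W := ⟨R.s i, R.s_mem i⟩
  have hsv : R.s i v = v + (- R.c i v) • R.a i := by rw [s_apply, neg_smul, sub_eq_add_neg]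
  have hne : (1 : R.W) ≠ s' := by
    intro h
    have h2 : (1 : E ≃ₗ[ℚ] E) = R.s i := congrArg Subtype.val h
    have h3 := R.s_self i
    rw [← h2] at h3
    exact R.not_pos_neg h3
  have hsum : ∑ w, L (cf w • ex ((w : E ≃ₗ[ℚ] E) v)) =
      ∑ w ∈ ({1, s'} : Finset R.W), L (cf w • ex ((w : E ≃ₗ[ℚ] E) v)) := by
    symm
    apply Finset.sum_subset (Finset.subset_univ _)
    intro w _ hw
    simp only [Finset.mem_insert, Finset.mem_singleton, not_or] at hw
    rw [map_smul, lin_ex, if_neg, smul_zero]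
    rintro ⟨r, hr⟩
    have hn := R.isom w.2 v v
    rw [hr] at hn
    simp only [map_add, map_smul, LinearMap.add_apply, LinearMap.smul_apply, smul_eq_mul] at hn
    rw [R.hsym (R.a i) v] at hn
    have hcm := R.c_mul i v
    have hn2 : r * ((r + R.c i v) * R.B (R.a i) (R.a i)) = 0 := by
      linear_combination hn + r * hcm
    rcases mul_eq_zero.1 hn2 with h | h
    · apply hw.1
      apply Subtype.ext
      apply R.stab w.2 hv
      rw [hr, h]; simp
    · have hr' : r = - R.c i v := by
        have := (mul_eq_zero.1 h).resolve_right (R.hne i)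
        linarith
      apply hw.2
      apply Subtype.ext
      have : R.s i * (w : E ≃ₗ[ℚ] E) = 1 := by
        apply R.stab (R.W.mul_mem (R.s_mem i) w.2) hv
        rw [LinearEquiv.mul_apply, hr, hr', ← hsv, s_s]
      change (w : E ≃ₗ[ℚ] E) = R.s i
      rw [← R.s_inv i]
      exact eq_inv_of_mul_eq_one_right this
  rw [hsum, Finset.sum_pair hne, map_smul, map_smul, h1, hs] at h0
  simp only [L, lin_ex] at h0
  rw [if_pos ⟨0, by simp⟩, if_pos ⟨_, hsv⟩] at h0
  have := R.s_isom i v (R.a i)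
  rw [s_self, map_neg] at this
  simp only [smul_eq_mul] at h0
  have e1 : ((1 : R.W) : E ≃ₗ[ℚ] E) v = v := rfl
  have e2 : (s' : E ≃ₗ[ℚ] E) v = R.s i v := rfl
  rw [e1] at h0
  change 1 * R.B v (R.a i) + -1 * R.B (R.s i v) (R.a i) = 0 at h0
  linarith

end RD

namespace RD
variable {E ι : Type} [AddCommGroup E] [Module ℚ E] [Fintype ι] (R : RD E ι)

abbrev dt (w : E ≃ₗ[ℚ] E) : ℚ := LinearMap.det (w : E →ₗ[ℚ] E)

lemma dt_mul (u w : E ≃ₗ[ℚ] E) : dt (u * w) = dt u * dt w := by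
  have : ((u * w : E ≃ₗ[ℚ] E) : E →ₗ[ℚ] E) = (u : E →ₗ[ℚ] E) ∘ₗ (w : E →ₗ[ℚ] E) := rfl
  rw [dt, this, LinearMap.det_comp]

lemma B_add (v y : E) : R.B (v + y) (v + y) = R.B v v + 2 * R.B v y + R.B y y := by
  simp only [map_add, LinearMap.add_apply]
  rw [R.hsym y v]; ring

lemma dt_one : dt (1 : E ≃ₗ[ℚ] E) = 1 := by
  have : ((1 : E ≃ₗ[ℚ] E) : E →ₗ[ℚ] E) = LinearMap.id := rfl
  rw [dt, this, LinearMap.det_id]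

lemma dt_s [FiniteDimensional ℚ E] (i : ι) : dt (R.s i) = -1 := by
  have : ((R.s i : E ≃ₗ[ℚ] E) : E →ₗ[ℚ] E) =
      LinearMap.transvection (-(2 / R.B (R.a i) (R.a i)) • R.B.flip (R.a i)) (R.a i) := by
    ext v
    rw [LinearMap.transvection.apply]
    change R.s i v = _
    rw [s_apply, c_eq, sub_eq_add_neg, ← neg_smul]
    simp only [LinearMap.smul_apply, LinearMap.flip_apply, smul_eq_mul]
    congr 2
    ring
  rw [dt, this, LinearMap.transvection.det]
  have := R.hne i
  simp only [LinearMap.smul_apply, LinearMap.flip_apply, smul_eq_mul]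
  field_simp
  norm_num

lemma kostant_zero : kostant R.a 0 = 1 := by
  unfold kostant
  have : ∀ f : {f : ι → ℕ // ∑ i, (f i) • R.a i = 0}, f = ⟨0, by simp⟩ := by
    rintro ⟨f, hf⟩
    apply Subtype.ext
    have h := congrArg R.φ hf
    rw [map_sum, map_zero] at h
    simp only [map_nsmul] at h
    rw [Finset.sum_eq_zero_iff_of_nonneg] at h
    · funext i
      have := h i (Finset.mem_univ _)
      rw [nsmul_eq_mul] at this
      have h2 := (mul_eq_zero.1 this).resolve_right (R.hφ i).ne'
      exact_mod_cast h2
    · intro i _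
      exact nsmul_nonneg (R.hφ i).le _
  rw [Nat.card_eq_one_iff_unique]
  exact ⟨⟨fun x y => (this x).trans (this y).symm⟩, ⟨⟨0, by simp⟩⟩⟩

lemma kostant_ne {v : E} (h : kostant R.a v ≠ 0) : ∃ f : ι → ℕ, ∑ i, f i • R.a i = v := by
  unfold kostant at h
  rw [Nat.card_ne_zero] at h
  obtain ⟨⟨f, hf⟩⟩ := h.1
  exact ⟨f, hf⟩

abbrev m (lam μ : E) : ℚ := wtMult R.B R.a R.hne lam μ

lemma m_eq [Fintype R.W] (lam μ : E) : R.m lam μ = ∑ w : R.W, dt (w : E ≃ₗ[ℚ] E) *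
    (kostant R.a ((w : E ≃ₗ[ℚ] E) (lam + R.ρ) - R.ρ - μ) : ℚ) := by
  unfold m wtMult
  rw [finsum_eq_sum_of_fintype]
  refine Finset.sum_congr rfl fun w _ => ?_
  rw [sub_right_comm]; rfl

lemma m_lam [Fintype R.W] {lam : E} (hv : ∀ i, 0 < R.B (lam + R.ρ) (R.a i)) : R.m lam lam = 1 := by
  rw [m_eq, Finset.sum_eq_single (1 : R.W)]
  · have : ((1 : R.W) : E ≃ₗ[ℚ] E) (lam + R.ρ) - R.ρ - lam = 0 := by
      change lam + R.ρ - R.ρ - lam = 0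
      abel
    rw [this, kostant_zero]
    change dt (1 : E ≃ₗ[ℚ] E) * _ = 1
    rw [dt_one]; simp
  · intro w _ hw
    by_cases h : kostant R.a ((w : E ≃ₗ[ℚ] E) (lam + R.ρ) - R.ρ - lam) = 0
    · rw [h]; simp
    · exfalso
      obtain ⟨f, hf⟩ := R.kostant_ne h
      apply hw
      apply Subtype.ext
      apply R.stab w.2 hv
      have h1 : (w : E ≃ₗ[ℚ] E) (lam + R.ρ) = (lam + R.ρ) + ∑ i, f i • R.a i := by rw [hf]; abel
      have h2 : 0 ≤ R.B (lam + R.ρ) (∑ i, f i • R.a i) := by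
        rw [map_sum]
        refine Finset.sum_nonneg fun i _ => ?_
        rw [map_nsmul]
        exact nsmul_nonneg (hv i).le _
      have h3 := R.isom w.2 (lam + R.ρ) (lam + R.ρ)
      rw [h1] at h3
      set y := ∑ i, f i • R.a i with hy
      set v := lam + R.ρ
      have h4 : R.B y y ≤ 0 := by
        rw [R.B_add] at h3
        linarith
      rw [h1, R.norm_eq_zero h4, add_zero]
  · simp

/-- The algebraic part. -/
lemma minuscule [FiniteDimensional ℚ E] [Finite R.W] {lam : E} (hdom : ∀ i, 0 ≤ R.c i lam)
    (hlat : ∀ i, ∃ z : ℤ, R.c i lam = z)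
    (hmin : ∀ μ, R.m lam μ ≠ 0 → ∃ w ∈ R.W, w lam = μ) :
    (∀ w ∈ R.W, R.m lam (w lam) = 1) ∧ ∀ i, R.c i lam ≤ 1 := by
  classical
  have := Fintype.ofFinite R.W
  have hv : ∀ i, 0 < R.B (lam + R.ρ) (R.a i) := by
    intro i
    have h1 := (R.c_nonneg_iff i lam).1 (hdom i)
    have h2 := R.rho_pos i
    rw [map_add, LinearMap.add_apply]; linarith
  set v := lam + R.ρ with hvdef
  let O : Finset E := Finset.univ.image (fun w : R.W => (w : E ≃ₗ[ℚ] E) lam)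
  have hO : ∀ μ, μ ∈ O ↔ ∃ w ∈ R.W, w lam = μ := by
    intro μ
    simp [O]
  let F : A E := ∑ μ ∈ O, R.m lam μ • ex μ
  have hFc : ∀ μ, F.coeff μ = R.m lam μ := by
    intro μ
    simp only [F, AddMonoidAlgebra.coeff_sum, Finsupp.finsetSum_apply, AddMonoidAlgebra.coeff_smul,
      Finsupp.smul_apply, ex_coeff, smul_eq_mul, mul_ite, mul_one, mul_zero, Finset.sum_ite_eq']
    split_ifs with h
    · rfl
    · by_contra h'
      exact h ((hO μ).2 (hmin μ (fun h => h' h.symm)))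
  let J : A E := ∑ w : R.W, dt (w : E ≃ₗ[ℚ] E) • ex ((w : E ≃ₗ[ℚ] E) v)
  have hDF : R.D * F = J := by
    have := R.kost_prod (fun w : R.W => (w : E ≃ₗ[ℚ] E) v - R.ρ) (fun w => dt (w : E ≃ₗ[ℚ] E)) F
      (fun μ => by rw [hFc, m_eq])
    rw [D, mul_assoc, this, Finset.mul_sum]
    refine Finset.sum_congr rfl fun w _ => ?_
    rw [mul_smul_comm, ex_mul, add_sub_cancel]
  have hRed : R.Red := R.red_of (fun w => dt (w : E ≃ₗ[ℚ] E)) v hv dt_one (fun i => R.dt_s i) F hDF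
  have hactJ : ∀ i, act (R.s i) J = - J := by
    intro i
    simp only [J, map_sum, map_smul, act_ex]
    rw [← Finset.sum_neg_distrib]
    refine Fintype.sum_equiv (Equiv.mulLeft (⟨R.s i, R.s_mem i⟩ : R.W)) _ _ ?_
    intro w
    have e : ((Equiv.mulLeft (⟨R.s i, R.s_mem i⟩ : R.W) w : R.W) : E ≃ₗ[ℚ] E) = R.s i * (w : E ≃ₗ[ℚ] E) := rfl
    rw [e]
    rw [dt_mul, dt_s, LinearEquiv.mul_apply, ← neg_smul]
    congr 1; ring
  have hactF : ∀ i, act (R.s i) F = F := by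
    intro i
    have h := hactJ i
    rw [← hDF, map_mul, R.act_D hRed, neg_mul, neg_inj] at h
    exact mul_left_cancel₀ R.D_ne h
  have hms : ∀ i μ, R.m lam (R.s i μ) = R.m lam μ := by
    intro i μ
    have := act_coeff (R.s i) F μ
    rw [hactF, hFc, hFc] at this
    exact this
  have hm : ∀ w ∈ R.W, R.m lam (w lam) = 1 := by
    intro w hw
    refine R.W_induction (p := fun w => R.m lam (w lam) = 1) (R.m_lam hv) ?_ hw
    intro i w _ h
    rw [LinearEquiv.mul_apply, hms, h]
  refine ⟨hm, fun i => ?_⟩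
  have hF2 : F = ∑ μ ∈ O, ex μ := by
    refine Finset.sum_congr rfl fun μ hμ => ?_
    obtain ⟨w, hw, rfl⟩ := (hO μ).1 hμ
    rw [hm w hw, one_smul]
  refine R.minuscule_aux hRed O lam hO ?_ J ?_ (by rw [← hF2, hDF]) lam ((hO lam).2 ⟨1, one_mem _, rfl⟩) i
  · intro μ hμ j
    obtain ⟨w, hw, rfl⟩ := (hO μ).1 hμ
    obtain ⟨σ, hσ⟩ := R.exists_perm hw
    obtain ⟨k, rfl⟩ := σ.surjective j
    rw [R.c_w hw (R.sg_sq w k) (hσ k)]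
    obtain ⟨z, hz⟩ := hlat k
    rw [hz]
    unfold sg
    split_ifs
    · exact ⟨-z, by push_cast; ring⟩
    · exact ⟨z, by ring⟩
  · intro u hu
    by_contra hne
    apply hu
    simp only [J, AddMonoidAlgebra.coeff_sum, Finsupp.finsetSum_apply, AddMonoidAlgebra.coeff_smul,
      Finsupp.smul_apply, ex_coeff, smul_eq_mul]
    refine Finset.sum_eq_zero fun w _ => ?_
    rw [if_neg, mul_zero]
    rintro rfl
    exact hne (R.isom w.2 _ _)

end RD

namespace RD
variable {E ι : Type} [AddCommGroup E] [Module ℚ E] [Fintype ι] (R : RD E ι)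

lemma mul_s_rho (w : E ≃ₗ[ℚ] E) (i : ι) : R.B ((w * R.s i) R.ρ) R.ρ =
    R.B (w R.ρ) R.ρ - R.c i R.ρ * R.B (w (R.a i)) R.ρ := by
  rw [LinearEquiv.mul_apply, s_apply, map_sub, map_smul, map_sub, map_smul, LinearMap.sub_apply,
    LinearMap.smul_apply, smul_eq_mul]

lemma exists_w0 [Finite R.W] : ∃ w ∈ R.W, ∀ i, R.Neg w i := by
  obtain ⟨⟨w, hw⟩, hmax⟩ := R.exists_max (fun w : R.W => - R.B ((w : E ≃ₗ[ℚ] E) R.ρ) R.ρ)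
  refine ⟨w, hw, fun i => ?_⟩
  rcases R.perm hw i with ⟨j, hj⟩ | h
  · exfalso
    have h1 := hmax ⟨w * R.s i, R.W.mul_mem hw (R.s_mem i)⟩
    change - R.B ((w * R.s i) R.ρ) R.ρ ≤ - R.B (w R.ρ) R.ρ at h1
    rw [mul_s_rho, hj, R.hsym (R.a j)] at h1
    have := mul_pos (R.rho_c_pos i) (R.rho_pos j)
    linarith
  · exact h

lemma ht_w0 {w : E ≃ₗ[ℚ] E} (hw : w ∈ R.W) (h : ∀ i, R.Neg w i) (v : E) :
    htq R.B R.a (w v) = - htq R.B R.a v := by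
  classical
  have h1 := R.ht_sub hw v
  simp only [h, Finset.filter_true] at h1
  have h2 : htq R.B R.a v = (∑ i, R.c i v) / 2 := rfl
  linarith

lemma ht_add (u v : E) : htq R.B R.a (u + v) = htq R.B R.a u + htq R.B R.a v := by
  have h2 : ∀ v, htq R.B R.a v = (∑ i, R.c i v) / 2 := fun _ => rfl
  simp only [h2, c_add, Finset.sum_add_distrib]; ring

lemma exists_rep [Finite R.W] {lam μ : E} (h : ∃ w ∈ R.W, w lam = μ) :
    ∃ u : R.W, (u : E ≃ₗ[ℚ] E) lam = μ ∧ ∀ i, R.c i lam = 0 → ¬ R.Neg (u : E ≃ₗ[ℚ] E) i := by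
  obtain ⟨w, hw, hwl⟩ := h
  have : Nonempty {u : R.W // (u : E ≃ₗ[ℚ] E) lam = μ} := ⟨⟨⟨w, hw⟩, hwl⟩⟩
  obtain ⟨⟨⟨u, hu⟩, hul⟩, hmax⟩ := Finite.exists_max
    (fun u : {u : R.W // (u : E ≃ₗ[ℚ] E) lam = μ} => R.B ((u.1 : E ≃ₗ[ℚ] E) R.ρ) R.ρ)
  refine ⟨⟨u, hu⟩, hul, ?_⟩
  rintro i hi ⟨j, hj⟩
  change u (R.a i) = _ at hj
  have h1 := hmax ⟨⟨u * R.s i, R.W.mul_mem hu (R.s_mem i)⟩, by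
    change u (R.s i lam) = μ
    rw [s_apply, hi, zero_smul, sub_zero]; exact hul⟩
  change R.B ((u * R.s i) R.ρ) R.ρ ≤ R.B (u R.ρ) R.ρ at h1
  rw [mul_s_rho, hj, map_neg, LinearMap.neg_apply, R.hsym (R.a j)] at h1
  have := mul_pos (R.rho_c_pos i) (R.rho_pos j)
  linarith

open Classical in
lemma len_eq (w : E ≃ₗ[ℚ] E) : len R.a w = (Finset.univ.filter fun i => R.Neg w i).card := by
  unfold len
  rw [Nat.card_eq_fintype_card, Fintype.card_subtype]
  congr 1
  ext i
  simp only [Finset.mem_filter, Finset.mem_univ, true_and]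
  rfl

lemma len_ht {lam : E} (h01 : ∀ i, R.c i lam = 0 ∨ R.c i lam = 1) {u : E ≃ₗ[ℚ] E} (hu : u ∈ R.W)
    (h : ∀ i, R.c i lam = 0 → ¬ R.Neg u i) :
    htq R.B R.a lam - htq R.B R.a (u lam) = len R.a u := by
  classical
  rw [R.ht_sub hu, len_eq, Finset.card_eq_sum_ones, Nat.cast_sum]
  refine Finset.sum_congr rfl fun i hi => ?_
  rw [Finset.mem_filter] at hi
  rcases h01 i with h' | h'
  · exact absurd hi.2 (h i h')
  · rw [h']; simp

lemma len_mul {lam : E} (hdom : ∀ i, 0 ≤ R.c i lam) {u x : E ≃ₗ[ℚ] E} (hu : u ∈ R.W)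
    (h : ∀ i, R.c i lam = 0 → ¬ R.Neg u i) (hx : x ∈ R.W) (hxl : x lam = lam) :
    len R.a (u * x) = len R.a u + len R.a x := by
  classical
  obtain ⟨σ, hσ⟩ := R.exists_perm hx
  have hc : ∀ i, R.c (σ i) lam = R.sg x i * R.c i lam := by
    intro i
    have := R.c_w hx (R.sg_sq x i) (hσ i) lam
    rwa [hxl] at this
  have key : ∀ i, (R.Neg x i ∧ ¬ R.Neg u (σ i) ∧ R.Neg (u * x) i) ∨
      (¬ R.Neg x i ∧ (R.Neg (u * x) i ↔ R.Neg u (σ i))) := by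
    intro i
    by_cases hn : R.Neg x i
    · left
      have h1 := hc i
      have h2 := hσ i
      rw [R.sg_neg hn] at h1 h2
      have h3 := hdom i
      have h4 := hdom (σ i)
      have h5 := h (σ i) (by linarith)
      refine ⟨hn, h5, ?_⟩
      rcases R.perm hu (σ i) with ⟨l, hl⟩ | h6
      · exact ⟨l, by rw [LinearEquiv.mul_apply, h2, neg_one_smul, map_neg, hl]⟩
      · exact absurd h6 h5
    · right
      refine ⟨hn, ?_⟩
      have h2 := hσ i
      rw [R.sg_pos hn, one_smul] at h2
      unfold Neg
      rw [LinearEquiv.mul_apply, h2]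
  rw [len_eq, len_eq, len_eq]
  have e1 : (Finset.univ.filter fun i => R.Neg u i).card = (Finset.univ.filter fun i => R.Neg u (σ i)).card := by
    symm
    refine Finset.card_bij (fun i _ => σ i) (fun i hi => ?_) (fun i _ j _ hij => σ.injective hij) (fun j hj => ?_)
    · simpa using hi
    · exact ⟨σ.symm j, by simpa using hj, by simp⟩
  rw [e1, ← Finset.card_union_of_disjoint]
  · congr 1
    ext i
    simp only [Finset.mem_filter, Finset.mem_univ, true_and, Finset.mem_union]
    have := key i
    tauto
  · rw [Finset.disjoint_left]
    intro i hi hi'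
    simp only [Finset.mem_filter, Finset.mem_univ, true_and] at hi hi'
    have := key i
    tauto

open Classical in
lemma tpoly_eq [Fintype R.W] (μ : E) : tpoly R.B R.a R.hne μ =
    ∑ w ∈ Finset.univ.filter (fun w : R.W => (w : E ≃ₗ[ℚ] E) μ = μ), (X : Polynomial ℚ) ^ len R.a (w : E ≃ₗ[ℚ] E) := by
  unfold tpoly
  have hfin : {w : R.W | (w : E ≃ₗ[ℚ] E) μ = μ}.Finite := Set.toFinite _
  rw [finsum_mem_eq_finite_toFinset_sum _ hfin]
  refine Finset.sum_congr ?_ fun _ _ => rfl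
  ext w; simp

lemma main [FiniteDimensional ℚ E] [Finite R.W] {lam : E} (hdom : ∀ i, 0 ≤ R.c i lam)
    (hlat : ∀ i, ∃ z : ℤ, R.c i lam = z)
    (hmin : ∀ μ, R.m lam μ ≠ 0 → ∃ w ∈ R.W, w lam = μ) (DP : Polynomial ℚ)
    (hDP : ∀ n : ℕ, DP.coeff n =
      ∑ᶠ mu ∈ {mu : E | htq R.B R.a (lam + mu) = (n : ℚ)}, R.m lam mu) :
    DP * tpoly R.B R.a R.hne lam = tpoly R.B R.a R.hne 0 := by
  classical
  have := Fintype.ofFinite R.W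
  obtain ⟨hm, h1⟩ := R.minuscule hdom hlat hmin
  have h01 : ∀ i, R.c i lam = 0 ∨ R.c i lam = 1 := by
    intro i
    obtain ⟨z, hz⟩ := hlat i
    have a1 := hdom i
    have a2 := h1 i
    rw [hz] at a1 a2 ⊢
    norm_cast at a1 a2 ⊢
    omega
  let O : Finset E := Finset.univ.image (fun w : R.W => (w : E ≃ₗ[ℚ] E) lam)
  have hO : ∀ μ, μ ∈ O ↔ ∃ w ∈ R.W, w lam = μ := by
    intro μ
    simp [O]
  obtain ⟨w0, hw0, hneg⟩ := R.exists_w0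
  have hU : ∀ μ ∈ O, ∃ u : R.W, (u : E ≃ₗ[ℚ] E) lam = w0 μ ∧ ∀ i, R.c i lam = 0 → ¬ R.Neg (u : E ≃ₗ[ℚ] E) i := by
    intro μ hμ
    obtain ⟨w, hw, rfl⟩ := (hO μ).1 hμ
    exact R.exists_rep ⟨w0 * w, R.W.mul_mem hw0 hw, rfl⟩
  choose! U hU1 hU2 using hU
  have hht : ∀ μ ∈ O, htq R.B R.a (lam + μ) = len R.a (U μ : E ≃ₗ[ℚ] E) := by
    intro μ hμ
    rw [← R.len_ht h01 (U μ).2 (hU2 μ hμ), hU1 μ hμ, R.ht_w0 hw0 hneg, ht_add]; ring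
  have hD : DP = ∑ μ ∈ O, (X : Polynomial ℚ) ^ len R.a (U μ : E ≃ₗ[ℚ] E) := by
    ext n
    rw [hDP, Polynomial.finsetSum_coeff]
    rw [finsum_mem_eq_sum_of_inter_support_eq (t := O.filter fun μ => htq R.B R.a (lam + μ) = (n : ℚ))]
    · rw [Finset.sum_filter]
      refine Finset.sum_congr rfl fun μ hμ => ?_
      rw [Polynomial.coeff_X_pow, hht μ hμ]
      have hmu : R.m lam μ = 1 := by
        obtain ⟨w, hw, rfl⟩ := (hO μ).1 hμ
        exact hm w hw
      rw [hmu]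
      simp only [Nat.cast_inj, eq_comm]
    · ext μ
      simp only [Set.mem_inter_iff, Set.mem_ofPred_eq, Function.mem_support, Finset.coe_filter]
      constructor
      · rintro ⟨h, h'⟩
        exact ⟨⟨(hO μ).2 (hmin μ h'), h⟩, h'⟩
      · rintro ⟨⟨_, h⟩, h'⟩
        exact ⟨h, h'⟩
  have hw0i : ∀ v, w0⁻¹ (w0 v) = v := by
    intro v; rw [← LinearEquiv.mul_apply, inv_mul_cancel]; rfl
  have hw0i' : ∀ v, w0 (w0⁻¹ v) = v := by
    intro v; rw [← LinearEquiv.mul_apply, mul_inv_cancel]; rfl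
  rw [hD, tpoly_eq, tpoly_eq, Finset.sum_mul_sum, ← Finset.sum_product']
  have hmemO : ∀ w : R.W, w0⁻¹ ((w : E ≃ₗ[ℚ] E) lam) ∈ O := fun w =>
    (hO _).2 ⟨w0⁻¹ * w, R.W.mul_mem (R.W.inv_mem hw0) w.2, rfl⟩
  refine Finset.sum_bij' (fun p _ => U p.1 * p.2)
    (fun w _ => (w0⁻¹ ((w : E ≃ₗ[ℚ] E) lam), (U (w0⁻¹ ((w : E ≃ₗ[ℚ] E) lam)))⁻¹ * w)) ?_ ?_ ?_ ?_ ?_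
  · intro p _
    exact Finset.mem_filter.2 ⟨Finset.mem_univ _, map_zero _⟩
  · intro w _
    rw [Finset.mem_product]
    refine ⟨hmemO w, ?_⟩
    simp only [Finset.mem_filter, Finset.mem_univ, true_and]
    have h2 := hU1 _ (hmemO w)
    rw [hw0i'] at h2
    set u := U (w0⁻¹ ((w : E ≃ₗ[ℚ] E) lam))
    change (u : E ≃ₗ[ℚ] E)⁻¹ ((w : E ≃ₗ[ℚ] E) lam) = lam
    rw [← h2, ← LinearEquiv.mul_apply, inv_mul_cancel]; rfl
  · rintro ⟨μ, x⟩ hp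
    simp only [Finset.mem_product, Finset.mem_filter, Finset.mem_univ, true_and] at hp
    have e : w0⁻¹ (((U μ * x : R.W) : E ≃ₗ[ℚ] E) lam) = μ := by
      change w0⁻¹ ((U μ : E ≃ₗ[ℚ] E) ((x : E ≃ₗ[ℚ] E) lam)) = μ
      rw [hp.2, hU1 μ hp.1, hw0i]
    simp only [e, inv_mul_cancel_left]
  · intro w _
    simp only [mul_inv_cancel_left]
  · rintro ⟨μ, x⟩ hp
    simp only [Finset.mem_product, Finset.mem_filter, Finset.mem_univ, true_and] at hp
    rw [← pow_add]
    congr 1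
    exact (R.len_mul hdom (U μ).2 (hU2 μ hp.1) x.2 hp.2).symm

end RD

theorem dynkin_polynomial_of_minuscule
    (E : Type) [AddCommGroup E] [Module ℚ E] [FiniteDimensional ℚ E]
    (ι : Type) [Fintype ι]
    (B : E →ₗ[ℚ] E →ₗ[ℚ] ℚ)
    (hsym : ∀ x y : E, B x y = B y x)
    (hpos : ∀ v : E, v ≠ 0 → 0 < B v v)
    (α : ι → E) (hα : ∀ i, α i ≠ 0) (hainj : Function.Injective α)
    (hne : ∀ i, B (α i) (α i) ≠ 0)
    (hspan : Submodule.span ℚ (Set.range α) = ⊤)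
    (hint : ∀ i j, ∃ z : ℤ, cpair B (α i) (α j) = (z : ℚ))
    (hperm : ∀ i j, (∃ l, refl B (α i) (hne i) (α j) = α l) ∨
      (∃ l, refl B (α i) (hne i) (α j) = - α l))
    (hhalf : ∃ φ : E →ₗ[ℚ] ℚ, ∀ i, 0 < φ (α i))
    (hWfin : Finite (weylGroup B α hne))
    -- λ is a dominant integral weight
    (lam : E) (hdom : IsDominant B α lam)
    (hlat : ∀ i, ∃ z : ℤ, cpair B (α i) lam = (z : ℚ))
    -- λ is minuscule: every weight of V_λ lies in Wλ
    (hmin : ∀ mu : E, wtMult B α hne lam mu ≠ 0 →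
      ∃ w : weylGroup B α hne, (w : E ≃ₗ[ℚ] E) lam = mu)
    -- DP is the Dynkin polynomial D_λ(q) = Σ_μ m_λ^μ q^{ht(λ+μ)}
    (DP : Polynomial ℚ)
    (hDP : ∀ n : ℕ, DP.coeff n =
      ∑ᶠ mu ∈ {mu : E | htq B α (lam + mu) = (n : ℚ)}, wtMult B α hne lam mu)
    -- d and dλ are the degrees of the basic invariants of W and of the
    -- stabilizer W_λ, characterized by Solomon's formula t_μ(q) = ∏ (1−q^{d_i(W_μ)})/(1−q)
    (l : ℕ) (hl : l = finrank ℚ E)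
    (d dl : Fin l → ℕ)
    (hd : tpoly B α hne 0 * (1 - (X : Polynomial ℚ)) ^ l =
      ∏ i, (1 - (X : Polynomial ℚ) ^ (d i)))
    (hdl : tpoly B α hne lam * (1 - (X : Polynomial ℚ)) ^ l =
      ∏ i, (1 - (X : Polynomial ℚ) ^ (dl i))) :
    -- D_λ(q) t_λ(q) = t_0(q), i.e. D_λ(q) = t_0(q)/t_λ(q), and
    -- D_λ(q) ∏ (1−q^{d_i(W_λ)}) = ∏ (1−q^{d_i})
    DP * tpoly B α hne lam = tpoly B α hne 0 ∧
    DP * ∏ i, (1 - (X : Polynomial ℚ) ^ (dl i)) =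
      ∏ i, (1 - (X : Polynomial ℚ) ^ (d i)) := by
  let R : RD E ι := ⟨B, hsym, hpos, α, hainj, hne, hint, hperm, hhalf.choose, hhalf.choose_spec⟩
  have hW : Finite R.W := hWfin
  have h1 : DP * tpoly B α hne lam = tpoly B α hne 0 := by
    refine R.main (lam := lam) hdom hlat ?_ DP hDP
    intro μ h
    obtain ⟨w, hw⟩ := hmin μ h
    exact ⟨w, w.2, hw⟩
  refine ⟨h1, ?_⟩
  rw [← hdl, ← hd, ← h1, mul_assoc]
end
end
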